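/- Let p be an odd prime, F/ℚ_p finite unramified, a ∈ 𝒪_F \ 𝒪_F^p with p ∤ v_F(a), and suppose L_{r,s} = F(ζ_{p^r}, a^{1/p^s}) satisfies the standing hypotheses. With t_{1,2}(r,s) the unique jump of L_{r,s}/L_{r,s−1} and t_{1,1}(r,s) that of L_{r,s}/L_{r−1,s}, for all r > s ≥ 1: t_{1,2}(s,s) = (p^{2s} + p^{2s−2} + p − 1)/(p+1), t_{1,2}(r,s) = (2p^{2s} + p − 1)/(p+1), and for r > s+1: t_{1,1}(r,s) = p^{r+s−1} − (2p^{2s+1} − p + 1)/(p+1). -/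

import Mathlib

/-- The `ℤ_[p]`-algebra structure on a field `L` over `ℚ_[p]`. -/
noncomputable def padicIntAlgebra (p : ℕ) [Fact p.Prime] (L : Type*) [Field L]
    [Algebra ℚ_[p] L] : Algebra ℤ_[p] L :=
  ((algebraMap ℚ_[p] L).comp (algebraMap ℤ_[p] ℚ_[p])).toAlgebra

/-- The ring of integers of a `p`-adic field `L`, i.e. the integral closure of `ℤ_[p]` in `L`. -/
noncomputable def ringOfInt (p : ℕ) [Fact p.Prime] (L : Type*) [Field L]
    [Algebra ℚ_[p] L] : Subring L :=
  letI := padicIntAlgebra p L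
  (integralClosure ℤ_[p] L).toSubring

/-- The maximal ideal of the ring of integers of `L` (its Jacobson radical). -/
noncomputable def maxIdeal (p : ℕ) [Fact p.Prime] (L : Type*) [Field L]
    [Algebra ℚ_[p] L] : Ideal (ringOfInt p L) :=
  (⊥ : Ideal (ringOfInt p L)).jacobson

/-- The `i`-th ramification group (in lower numbering) of `L/K`, as a subset of `Gal(L/K)`:
`σ ∈ G_i` iff `σ x - x ∈ 𝔭_L ^ (i+1)` for every `x` in the ring of integers of `L`. -/
noncomputable def ramSet (p : ℕ) [Fact p.Prime] (K L : Type*) [Field K] [Field L]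
    [Algebra ℚ_[p] L] [Algebra K L] (i : ℕ) : Set (L ≃ₐ[K] L) :=
  {σ | ∀ x : ringOfInt p L, ∃ y ∈ maxIdeal p L ^ (i + 1), (y : L) = σ (x : L) - (x : L)}

/-- `t` is a ramification jump of `L/K` if `G_t ≠ G_{t+1}`. -/
noncomputable def IsRamJump (p : ℕ) [Fact p.Prime] (K L : Type*) [Field K] [Field L]
    [Algebra ℚ_[p] L] [Algebra K L] (t : ℕ) : Prop :=
  ramSet p K L t ≠ ramSet p K L (t + 1)

/-- `L/K` has a unique ramification jump, equal to `t`. -/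
noncomputable def HasUniqueRamJump (p : ℕ) [Fact p.Prime] (K L : Type*) [Field K] [Field L]
    [Algebra ℚ_[p] L] [Algebra K L] (t : ℕ) : Prop :=
  IsRamJump p K L t ∧ ∀ t', IsRamJump p K L t' → t' = t

/-- Same as `HasUniqueRamJump`, with the `K`-algebra structure on `L` given by an
explicit ring homomorphism. -/
noncomputable def HasUniqueRamJumpHom (p : ℕ) [Fact p.Prime] (K L : Type*) [Field K] [Field L]
    [Algebra ℚ_[p] L] (f : K →+* L) (t : ℕ) : Prop :=
  letI := f.toAlgebra
  HasUniqueRamJump p K L t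

/-- The absolute ramification index `e(L|ℚ_p)`, i.e. the valuation of `p` in `L`. -/
noncomputable def eAbs (p : ℕ) [Fact p.Prime] (L : Type*) [Field L] [Algebra ℚ_[p] L] : ℕ :=
  sSup {n : ℕ | Ideal.span {(p : ringOfInt p L)} ≤ maxIdeal p L ^ n}

/-- The normalized valuation `v_L(x)` of an integral element `x` of `L`. -/
noncomputable def valInt (p : ℕ) [Fact p.Prime] (L : Type*) [Field L] [Algebra ℚ_[p] L]
    (x : L) : ℕ :=
  sSup {n : ℕ | ∃ y ∈ maxIdeal p L ^ n, (y : L) = x}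

/-!
All fields live in an algebraic closure of `F` with its spectral norm, and a lower ramification jump
`t` of a step of prime degree is read off a uniformizer `y` as `‖g y - y‖ = ‖y‖ ^ (t + 1)`.

If `τ` generates the Galois group of a totally ramified step `M / K` of degree `p`, and `x`, `y` are
uniformizers of `M`, `K`, then factoring the minimal polynomial of `x` over `K` at `g x` gives
`‖g y - y‖ = ∏ j, ‖g (τ ^ j x) - x‖` (Herbrand). Apply this to both sides of a compositum of two
steps of degree `p`. If their jumps are `t₁ < t₂`, then the step opposite the one of jump
`t₁` has jump `t₁` again, and the step opposite the one of jump `t₂` has jump `t₁ + p (t₂ - t₁)`.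

These unit squares tile the grid of the fields `L r s = F(ζ_{p^r}, a^{1/p^s})`, `r ≥ 1`. On its two
edges, the uniformizers `ζ - 1` and `α ^ i (ζ - 1) ^ j` give the jumps `p ^ (r - 1) - 1` of
`L r 0 / L (r - 1) 0` and `p ^ s` of `L 1 s / L 1 (s - 1)`; a double induction propagates them over
the grid.
-/

open Module Polynomial IntermediateField

section IsometricAction

variable {G P X : Type*} [Group G] [Group P] [PseudoMetricSpace X] [IsUltrametricDist X]
  [MulAction G X] [IsIsometricSMul G X] {f : G →* P} {x : X}

theorem dist_pow_smul_le (g : G) (x : X) (k : ℕ) : dist (g ^ k • x) x ≤ dist (g • x) x := by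
  induction k with
  | zero => simp
  | succ k ih =>
    calc dist (g ^ (k + 1) • x) x ≤ max (dist (g ^ (k + 1) • x) (g • x)) (dist (g • x) x) :=
          dist_triangle_max _ _ _
      _ ≤ dist (g • x) x := max_le (by rwa [pow_succ', mul_smul, dist_smul]) le_rfl

theorem dist_smul_le_of_map_eq_pow (hf : f.ker ≤ MulAction.stabilizer G x) {g h : G} {k : ℕ}
    (hgh : f h = f g ^ k) : dist (h • x) x ≤ dist (g • x) x := by
  have hker : (g ^ k)⁻¹ * h ∈ f.ker := by simp [MonoidHom.mem_ker, hgh]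
  have hx : h • x = g ^ k • x := by
    rw [← inv_smul_eq_iff, ← mul_smul]
    exact hf hker
  exact hx ▸ dist_pow_smul_le g x k

theorem pow_mul_val_inv {p : ℕ} [Fact p.Prime] {b : P} (hb : b ^ p = 1) {j : ZMod p}
    (hj : j ≠ 0) : b ^ (j.val * j⁻¹.val) = b := by
  have hmod : (j.val * j⁻¹.val : ℕ) ≡ 1 [MOD p] := by
    rw [← ZMod.natCast_eq_natCast_iff]
    simp [hj]
  have := pow_eq_pow_iff_modEq.2 (hmod.of_dvd (orderOf_dvd_of_pow_eq_one hb))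
  rwa [pow_one] at this

/-- Both elements generate the same line of the `ZMod p`-plane spanned by `f σ` and `f τ`. -/
theorem dist_mul_pow_smul_le {p : ℕ} [Fact p.Prime] (hf : f.ker ≤ MulAction.stabilizer G x)
    {σ τ : G} (hcomm : Commute (f σ) (f τ)) (hτ : f τ ^ p = 1) {j : ZMod p} (hj : j ≠ 0) :
    dist ((τ * σ ^ j⁻¹.val) • x) x ≤ dist ((σ * τ ^ j.val) • x) x := by
  refine dist_smul_le_of_map_eq_pow hf (k := j⁻¹.val) ?_
  simp only [map_mul, map_pow]
  rw [(hcomm.pow_right _).mul_pow, ← pow_mul, pow_mul_val_inv hτ hj,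
    (hcomm.pow_left _).eq]

theorem prod_erase_dist_mul_pow_smul_comm {p : ℕ} [Fact p.Prime]
    (hf : f.ker ≤ MulAction.stabilizer G x) {σ τ : G} (hcomm : Commute (f σ) (f τ))
    (hσ : f σ ^ p = 1) (hτ : f τ ^ p = 1) :
    ∏ j ∈ (Finset.univ : Finset (ZMod p)).erase 0, dist ((τ * σ ^ j.val) • x) x =
      ∏ j ∈ (Finset.univ : Finset (ZMod p)).erase 0, dist ((σ * τ ^ j.val) • x) x := by
  refine Finset.prod_nbij' (·⁻¹) (·⁻¹) (by simp) (by simp) (by simp) (by simp) fun j hj ↦ ?_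
  have hj : j ≠ 0 := Finset.ne_of_mem_erase hj
  refine le_antisymm ?_ (dist_mul_pow_smul_le hf hcomm.symm hσ hj)
  simpa only [inv_inv] using dist_mul_pow_smul_le hf hcomm hτ (inv_ne_zero hj)

theorem dist_mul_smul_eq_of_lt {g h : G} (hlt : dist (h • x) x < dist (g • x) x) :
    dist ((g * h) • x) x = dist (g • x) x := by
  have hgh : dist ((g * h) • x) (g • x) = dist (h • x) x := by rw [mul_smul, dist_smul]
  rw [← hgh] at hlt
  exact (IsUltrametricDist.dist_eq_max_of_dist_ne_dist _ _ _ hlt.ne).trans (max_eq_right hlt.le)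

theorem prod_dist_mul_pow_smul_of_lt {p : ℕ} [Fact p.Prime]
    (hf : f.ker ≤ MulAction.stabilizer G x) {σ τ : G} (hcomm : Commute (f σ) (f τ))
    (hσ : f σ ^ p = 1) (hτ : f τ ^ p = 1)
    (hlt : ∏ j : ZMod p, dist ((τ * σ ^ j.val) • x) x <
      ∏ j : ZMod p, dist ((σ * τ ^ j.val) • x) x) :
    ∏ j : ZMod p, dist ((σ * τ ^ j.val) • x) x = dist (σ • x) x ^ p ∧
      ∏ j : ZMod p, dist ((τ * σ ^ j.val) • x) x =
        dist (τ • x) x * dist (σ • x) x ^ (p - 1) := by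
  simp only [← Finset.mul_prod_erase _ _ (Finset.mem_univ (0 : ZMod p)), ZMod.val_zero, pow_zero,
    mul_one, prod_erase_dist_mul_pow_smul_comm hf hcomm hσ hτ] at hlt ⊢
  have hτσ : dist (τ • x) x < dist (σ • x) x :=
    lt_of_mul_lt_mul_right hlt (Finset.prod_nonneg fun _ _ ↦ dist_nonneg)
  have hprod : ∏ j ∈ (Finset.univ : Finset (ZMod p)).erase 0, dist ((σ * τ ^ j.val) • x) x =
      dist (σ • x) x ^ (p - 1) := by
    rw [Finset.prod_congr rfl fun j _ ↦
      dist_mul_smul_eq_of_lt ((dist_pow_smul_le τ x j.val).trans_lt hτσ)]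
    simp
  rw [hprod, ← pow_succ', Nat.sub_add_cancel (Fact.out : p.Prime).one_le]
  exact ⟨rfl, rfl⟩

end IsometricAction

/-- The absolute value of `B` is discrete on the subfield `F`: its nonzero values there are powers
of a real number `q ∈ (0, 1)`. -/
structure IsDiscreteNorm (F B : Type*) [Field F] [NormedField B] [Algebra F B] (q : ℝ) :
    Prop where
  pos : 0 < q
  lt_one : q < 1
  exists_zpow : ∀ k : F, k ≠ 0 → ∃ m : ℤ, ‖algebraMap F B k‖ = q ^ m

/-- `y` is a uniformizer of the finite extension `K` of `F`, where `K / F` is totally ramified and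
`q` is the absolute value of a uniformizer of `F`. -/
structure IsUniformizer {F B : Type*} [Field F] [NormedField B] [Algebra F B] (q : ℝ)
    (K : IntermediateField F B) (y : B) : Prop where
  mem : y ∈ K
  finrank_pos : 0 < finrank F K
  norm_pow_finrank : ‖y‖ ^ finrank F K = q

section Uniformizer

variable {F B : Type*} [Field F] [NormedField B] [Algebra F B] {q : ℝ}
  {K : IntermediateField F B} {y : B}

namespace IsUniformizer

theorem norm_eq (hy : IsUniformizer q K y) {z : B} (hz : IsUniformizer q K z) : ‖y‖ = ‖z‖ :=
  (pow_left_inj₀ (norm_nonneg y) (norm_nonneg z) hy.finrank_pos.ne').1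
    (hy.norm_pow_finrank.trans hz.norm_pow_finrank.symm)

theorem norm_eq_pow {M : IntermediateField F B} {x : B} {p : ℕ} (hy : IsUniformizer q K y)
    (hx : IsUniformizer q M x) (hfinrank : finrank F M = finrank F K * p) : ‖y‖ = ‖x‖ ^ p := by
  rw [← pow_left_inj₀ (norm_nonneg y) (by positivity) hy.finrank_pos.ne', hy.norm_pow_finrank,
    ← pow_mul, mul_comm, ← hfinrank, hx.norm_pow_finrank]

theorem norm_pos (hF : IsDiscreteNorm F B q) (hy : IsUniformizer q K y) : 0 < ‖y‖ :=
  (norm_nonneg y).lt_of_ne' fun h ↦ hF.pos.ne <| by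
    rw [← hy.norm_pow_finrank, h, zero_pow hy.finrank_pos.ne']

theorem norm_lt_one (hF : IsDiscreteNorm F B q) (hy : IsUniformizer q K y) : ‖y‖ < 1 :=
  (pow_lt_one_iff_of_nonneg (norm_nonneg y) hy.finrank_pos.ne').1
    (hy.norm_pow_finrank.trans_lt hF.lt_one)

theorem exists_norm_smul_pow (hF : IsDiscreteNorm F B q) (hy : IsUniformizer q K y) {k : F}
    (hk : k ≠ 0) (i : ℕ) : ∃ m : ℤ, ‖algebraMap F B k‖ = q ^ m ∧
      ‖k • y ^ i‖ = ‖y‖ ^ (finrank F K * m + i : ℤ) := by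
  obtain ⟨m, hm⟩ := hF.exists_zpow k hk
  refine ⟨m, hm, ?_⟩
  rw [Algebra.smul_def, norm_mul, hm, ← hy.norm_pow_finrank, norm_pow,
    zpow_add₀ (hy.norm_pos hF).ne', zpow_mul, zpow_natCast, zpow_natCast]

theorem norm_smul_pow_ne (hF : IsDiscreteNorm F B q) (hy : IsUniformizer q K y) {k l : F}
    (hk : k ≠ 0) (hl : l ≠ 0) {i j : Fin (finrank F K)} (hij : i ≠ j) :
    ‖k • y ^ (i : ℕ)‖ ≠ ‖l • y ^ (j : ℕ)‖ := by
  obtain ⟨m, -, hm⟩ := hy.exists_norm_smul_pow hF hk i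
  obtain ⟨n, -, hn⟩ := hy.exists_norm_smul_pow hF hl j
  rw [hm, hn]
  intro h
  have hexp := zpow_right_injective₀ (hy.norm_pos hF) (hy.norm_lt_one hF).ne h
  have hmod := congrArg (· % (finrank F K : ℤ)) hexp
  simp only [Int.mul_add_emod_self_left] at hmod
  rw [Int.emod_eq_of_lt (by positivity) (by exact_mod_cast i.2),
    Int.emod_eq_of_lt (by positivity) (by exact_mod_cast j.2)] at hmod
  exact hij (Fin.ext (by exact_mod_cast hmod))

variable [IsUltrametricDist B]

theorem norm_smul_pow_le_norm_sum (hF : IsDiscreteNorm F B q) (hy : IsUniformizer q K y)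
    (c : Fin (finrank F K) → F) (i : Fin (finrank F K)) :
    ‖c i • y ^ (i : ℕ)‖ ≤ ‖∑ j, c j • y ^ (j : ℕ)‖ := by
  classical
  rcases eq_or_ne (c i) 0 with hc | hc
  · simp [hc]
  have hi : i ∈ Finset.univ.filter (c · ≠ 0) := by simpa using hc
  have hsupport : ∑ j with c j ≠ 0, c j • y ^ (j : ℕ) = ∑ j, c j • y ^ (j : ℕ) :=
    Finset.sum_filter_of_ne fun j _ hj h ↦ hj (by rw [h, zero_smul])
  rw [← hsupport, IsUltrametricDist.norm_sum_eq_sup'_of_pairwise_ne ⟨i, hi⟩]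
  · exact Finset.le_sup' (fun j ↦ ‖c j • y ^ (j : ℕ)‖) hi
  · intro j hj k hk hjk
    exact hy.norm_smul_pow_ne hF (by simpa using hj) (by simpa using hk) hjk

theorem linearIndependent_pow (hF : IsDiscreteNorm F B q) (hy : IsUniformizer q K y) :
    LinearIndependent F fun i : Fin (finrank F K) ↦ y ^ (i : ℕ) := by
  refine Fintype.linearIndependent_iff.2 fun c hc i ↦ ?_
  have hle := hy.norm_smul_pow_le_norm_sum hF c i
  rw [hc, norm_zero, norm_le_zero_iff, smul_eq_zero] at hle
  exact hle.resolve_right (pow_ne_zero _ (norm_pos_iff.1 (hy.norm_pos hF)))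

theorem exists_sum_smul_pow_eq (hF : IsDiscreteNorm F B q) (hy : IsUniformizer q K y) {z : B}
    (hz : z ∈ K) : ∃ c : Fin (finrank F K) → F, ∑ i, c i • y ^ (i : ℕ) = z := by
  have hli : LinearIndependent F fun i : Fin (finrank F K) ↦ (⟨y, hy.mem⟩ : K) ^ (i : ℕ) :=
    LinearIndependent.of_comp K.val.toLinearMap (hy.linearIndependent_pow hF)
  have : Nonempty (Fin (finrank F K)) := ⟨⟨0, hy.finrank_pos⟩⟩
  let b := basisOfLinearIndependentOfCardEqFinrank hli (Fintype.card_fin _)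
  refine ⟨b.repr ⟨z, hz⟩, ?_⟩
  simpa [b] using congrArg K.val (b.sum_repr ⟨z, hz⟩)

theorem norm_coeff_le_one (hF : IsDiscreteNorm F B q) (hy : IsUniformizer q K y)
    {c : Fin (finrank F K) → F} (hc : ‖∑ i, c i • y ^ (i : ℕ)‖ ≤ 1) (i : Fin (finrank F K)) :
    ‖algebraMap F B (c i)‖ ≤ 1 := by
  rcases eq_or_ne (c i) 0 with h | h
  · simp [h]
  obtain ⟨m, hm, hterm⟩ := hy.exists_norm_smul_pow hF h i
  have hle := (hy.norm_smul_pow_le_norm_sum hF c i).trans hc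
  rw [hterm, ← zpow_zero ‖y‖,
    zpow_le_zpow_iff_right_of_lt_one₀ (hy.norm_pos hF) (hy.norm_lt_one hF)] at hle
  have hm0 : 0 ≤ m := by
    by_contra! hlt
    have := i.2
    nlinarith
  exact hm ▸ zpow_le_one₀ hF.pos hF.lt_one.le hm0

theorem mem_fixingSubgroup (hF : IsDiscreteNorm F B q) (hy : IsUniformizer q K y)
    {g : B ≃ₐ[F] B} (hg : g y = y) : g ∈ K.fixingSubgroup := by
  refine (mem_fixingSubgroup_iff K g).2 fun z hz ↦ ?_
  obtain ⟨c, rfl⟩ := hy.exists_sum_smul_pow_eq hF hz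
  simp [hg]

theorem exists_aeval_eq (hF : IsDiscreteNorm F B q) (hy : IsUniformizer q K y) {z : B}
    (hz : z ∈ K) (hz1 : ‖z‖ ≤ 1) :
    ∃ P : F[X], (∀ k, ‖algebraMap F B (P.coeff k)‖ ≤ 1) ∧ aeval y P = z := by
  classical
  obtain ⟨c, rfl⟩ := hy.exists_sum_smul_pow_eq hF hz
  refine ⟨ofFn _ c, fun k ↦ ?_, ?_⟩
  · rcases lt_or_ge k (finrank F K) with hk | hk
    · rw [ofFn_coeff_eq_val_of_lt _ hk]
      exact hy.norm_coeff_le_one hF hz1 _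
    · simp [ofFn_coeff_eq_zero_of_ge _ hk]
  · simp [ofFn_eq_sum_monomial, aeval_monomial, Algebra.smul_def]

end IsUniformizer

theorem map_minpoly_eq_prod_aroots [Normal F B] (K : IntermediateField F B) (x : B) :
    (minpoly K x).map (algebraMap K B) = (((minpoly K x).aroots B).map fun z ↦ X - C z).prod :=
  Splits.eq_prod_roots_of_monic (Normal.splits inferInstance x)
    ((minpoly.monic (Normal.isIntegral inferInstance x)).map _)

theorem map_map_minpoly_eq_prod_aroots [Normal F B] (x : B) (g : B ≃ₐ[F] B) :
    ((minpoly K x).map (algebraMap K B)).map (g : B →+* B) =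
      (((minpoly K x).aroots B).map fun z ↦ X - C (g z)).prod := by
  rw [map_minpoly_eq_prod_aroots, Polynomial.map_multiset_prod]
  simp

theorem norm_eval_map_minpoly [Normal F B] (x : B) (g : B ≃ₐ[F] B) :
    ‖(((minpoly K x).map (algebraMap K B)).map (g : B →+* B)).eval x‖ =
      (((minpoly K x).aroots B).map fun z ↦ ‖g z - x‖).prod := by
  rw [map_map_minpoly_eq_prod_aroots, eval_multiset_prod]
  refine (map_multiset_prod (normHom : B →*₀ ℝ) _).trans ?_
  simp [norm_sub_rev]

theorem norm_pow_sub_pow_le [IsUltrametricDist B] {a b : B} (ha : ‖a‖ ≤ 1) (hb : ‖b‖ ≤ 1)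
    (i : ℕ) : ‖a ^ i - b ^ i‖ ≤ ‖a - b‖ := by
  let v := NormedField.valuation (K := B)
  exact (Valuation.integer.integers v).le_of_dvd
    (sub_dvd_pow_sub_pow (⟨a, ha⟩ : v.integer) ⟨b, hb⟩ i)

variable [IsIsometricSMul (B ≃ₐ[F] B) B]

theorem norm_algEquiv (g : B ≃ₐ[F] B) (x : B) : ‖g x‖ = ‖x‖ := by
  simpa using dist_smul g x 0

theorem norm_eq_of_mem_aroots_minpoly [Normal F B] {x z : B}
    (hz : z ∈ (minpoly K x).aroots B) : ‖z‖ = ‖x‖ := by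
  have hconj := (isConjRoot_iff_mem_minpoly_aroots (Normal.isIntegral inferInstance x)).2 hz
  obtain ⟨g, rfl⟩ := isConjRoot_iff_exists_algEquiv.1 hconj
  exact (norm_algEquiv (g.restrictScalars F) z).symm

variable [IsUltrametricDist B]

namespace IsUniformizer

/-- An automorphism moves a uniformizer at least as much as any other integer, because the powers
of the uniformizer generate the integers of `K` over those of `F`. -/
theorem norm_map_sub_le (hF : IsDiscreteNorm F B q) (hy : IsUniformizer q K y) (g : B ≃ₐ[F] B)
    {z : B} (hz : z ∈ K) (hz1 : ‖z‖ ≤ 1) : ‖g z - z‖ ≤ ‖g y - y‖ := by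
  obtain ⟨c, rfl⟩ := hy.exists_sum_smul_pow_eq hF hz
  rw [map_sum, ← Finset.sum_sub_distrib]
  refine IsUltrametricDist.norm_sum_le_of_forall_le_of_nonneg (norm_nonneg _) fun i _ ↦ ?_
  have hy1 := (hy.norm_lt_one hF).le
  calc ‖g (c i • y ^ (i : ℕ)) - c i • y ^ (i : ℕ)‖
      = ‖algebraMap F B (c i)‖ * ‖g y ^ (i : ℕ) - y ^ (i : ℕ)‖ := by
        rw [map_smul, map_pow, ← smul_sub, Algebra.smul_def, norm_mul]
    _ ≤ 1 * ‖g y - y‖ := mul_le_mul (hy.norm_coeff_le_one hF hz1 i)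
        (norm_pow_sub_pow_le (by rwa [norm_algEquiv]) hy1 _) (norm_nonneg _) zero_le_one
    _ = ‖g y - y‖ := one_mul _

end IsUniformizer

theorem mem_lifts_integer_subtype_iff {f : B[X]} :
    f ∈ lifts (NormedField.valuation (K := B)).integer.subtype ↔ ∀ k, ‖f.coeff k‖ ≤ 1 := by
  simp only [lifts_iff_coeff_lifts, Subring.coe_subtype, Subtype.range_coe_subtype,
    Set.mem_ofPred_eq, Valuation.mem_integer_iff]
  rfl

theorem norm_coeff_prod_X_sub_C_le_one {s : Multiset B} (hs : ∀ z ∈ s, ‖z‖ ≤ 1) (k : ℕ) :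
    ‖(s.map fun z ↦ X - C z).prod.coeff k‖ ≤ 1 := by
  revert k
  rw [← mem_lifts_integer_subtype_iff]
  refine Subsemiring.multiset_prod_mem _ _ fun f hf ↦ ?_
  obtain ⟨z, hz, rfl⟩ := Multiset.mem_map.1 hf
  exact ⟨X - C ⟨z, hs z hz⟩, by simp⟩

theorem norm_eval_le_of_dvd {f P : B[X]} (hf : ∀ k, ‖f.coeff k‖ ≤ 1) (hmonic : f.Monic)
    (hP : ∀ k, ‖P.coeff k‖ ≤ 1) (hdvd : f ∣ P) {x : B} (hx : ‖x‖ ≤ 1) :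
    ‖P.eval x‖ ≤ ‖f.eval x‖ := by
  let v := NormedField.valuation (K := B)
  obtain ⟨f', rfl, -, hf'⟩ :=
    lifts_and_natDegree_eq_and_monic (mem_lifts_integer_subtype_iff.2 hf) hmonic
  obtain ⟨P', rfl⟩ := mem_lifts_integer_subtype_iff.2 hP
  have hdvd' : f' ∣ P' := (map_dvd_map _ Subtype.val_injective hf').1 hdvd
  have hle := (Valuation.integer.integers v).le_of_dvd (eval_dvd (x := ⟨x, hx⟩) hdvd')
  have heval (h : v.integer[X]) :
      (h.map v.integer.subtype).eval x = (h.eval ⟨x, hx⟩ : v.integer) := by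
    simpa using h.eval_map_apply v.integer.subtype ⟨x, hx⟩
  rw [coe_mapRingHom, heval, heval]
  exact hle

variable {M : IntermediateField F B} {x : B} [Normal F B]

theorem norm_coeff_map_minpoly_le_one (hx1 : ‖x‖ ≤ 1) (k : ℕ) :
    ‖((minpoly K x).map (algebraMap K B)).coeff k‖ ≤ 1 := by
  rw [map_minpoly_eq_prod_aroots]
  exact norm_coeff_prod_X_sub_C_le_one
    (fun z hz ↦ (norm_eq_of_mem_aroots_minpoly hz).trans_le hx1) k

namespace IsUniformizer

theorem norm_map_sub_le_prod (hF : IsDiscreteNorm F B q) (hx : IsUniformizer q M x) (hy : y ∈ K)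
    (hyM : y ∈ M) (hy1 : ‖y‖ ≤ 1) (g : B ≃ₐ[F] B) :
    ‖g y - y‖ ≤ (((minpoly K x).aroots B).map fun z ↦ ‖g z - x‖).prod := by
  obtain ⟨P, hP, hPx⟩ := hx.exists_aeval_eq hF hyM hy1
  set f := (minpoly K x).map (algebraMap K B)
  have hx1 := (hx.norm_lt_one hF).le
  have hdvd : f ∣ P.map (algebraMap F B) - C y := by
    have hmin : minpoly K x ∣ P.map (algebraMap F K) - C ⟨y, hy⟩ := minpoly.dvd _ _ (by
      rw [map_sub, aeval_map_algebraMap, aeval_C, hPx]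
      exact sub_self y)
    simpa [Polynomial.map_map, ← IsScalarTower.algebraMap_eq] using map_dvd (algebraMap K B) hmin
  have hgdvd : f.map (g : B →+* B) ∣ P.map (algebraMap F B) - C (g y) := by
    have hg : (g : B →+* B).comp (algebraMap F B) = algebraMap F B := RingHom.ext g.commutes
    simpa [Polynomial.map_map, hg] using map_dvd (g : B →+* B) hdvd
  have hgf (k : ℕ) : ‖(f.map (g : B →+* B)).coeff k‖ ≤ 1 := by
    rw [coeff_map, RingHom.coe_coe, norm_algEquiv]
    exact norm_coeff_map_minpoly_le_one hx1 k
  have hPg (k : ℕ) : ‖(P.map (algebraMap F B) - C (g y)).coeff k‖ ≤ 1 := by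
    rw [coeff_sub, coeff_map, coeff_C, sub_eq_add_neg]
    refine (IsUltrametricDist.norm_add_le_max _ _).trans (max_le (hP k) ?_)
    split_ifs <;> simp [norm_algEquiv, hy1]
  have hmonic : f.Monic := (minpoly.monic (Normal.isIntegral inferInstance x)).map _
  have hle := norm_eval_le_of_dvd hgf (hmonic.map _) hPg hgdvd hx1
  rw [norm_eval_map_minpoly] at hle
  simpa [hPx, norm_sub_rev, eval_map_algebraMap] using hle

theorem prod_le_norm_map_sub (hF : IsDiscreteNorm F B q) (hx1 : ‖x‖ ≤ 1)
    (hy : IsUniformizer q K y) (g : B ≃ₐ[F] B) :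
    (((minpoly K x).aroots B).map fun z ↦ ‖g z - x‖).prod ≤ ‖g y - y‖ := by
  set f := (minpoly K x).map (algebraMap K B) with hf
  have hfx : f.eval x = 0 := by
    simp [hf, eval_map_algebraMap]
  have hsum : (f.map (g : B →+* B)).eval x =
      ∑ k ∈ Finset.range (f.natDegree + 1), (g (f.coeff k) - f.coeff k) * x ^ k := by
    simp only [sub_mul, Finset.sum_sub_distrib, ← eval_eq_sum_range, hfx, sub_zero, eval_map,
      eval₂_eq_sum_range]
    simp
  rw [← norm_eval_map_minpoly, hsum]
  refine IsUltrametricDist.norm_sum_le_of_forall_le_of_nonneg (norm_nonneg _) fun k _ ↦ ?_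
  calc ‖(g (f.coeff k) - f.coeff k) * x ^ k‖ ≤ ‖g (f.coeff k) - f.coeff k‖ := by
        rw [norm_mul, norm_pow]
        exact mul_le_of_le_one_right (norm_nonneg _) (pow_le_one₀ (norm_nonneg _) hx1)
    _ ≤ ‖g y - y‖ := hy.norm_map_sub_le hF g (by simp [hf]) (norm_coeff_map_minpoly_le_one hx1 k)

theorem norm_map_sub_eq_prod (hF : IsDiscreteNorm F B q) (hKM : K ≤ M)
    (hy : IsUniformizer q K y) (hx : IsUniformizer q M x) (g : B ≃ₐ[F] B) :
    ‖g y - y‖ = (((minpoly K x).aroots B).map fun z ↦ ‖g z - x‖).prod :=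
  (hx.norm_map_sub_le_prod hF hy.mem (hKM hy.mem) (hy.norm_lt_one hF).le g).antisymm
    (hy.prod_le_norm_map_sub hF (hx.norm_lt_one hF).le g)

end IsUniformizer

end Uniformizer

section Herbrand

theorem pow_val_smul_injective {G X : Type*} [Group G] [MulAction G X] {p : ℕ} [hp : Fact p.Prime]
    {τ : G} {x : X} (hτp : τ ^ p • x = x) (hτ : τ • x ≠ x) :
    Function.Injective fun j : ZMod p ↦ τ ^ j.val • x := by
  have hperiod : Function.minimalPeriod (τ • ·) x = p := by
    refine Function.minimalPeriod_eq_prime ?_ hτ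
    rwa [Function.IsPeriodicPt, Function.IsFixedPt, smul_iterate]
  intro i j hij
  refine ZMod.val_injective p
    (Function.iterate_injOn_Iio_minimalPeriod (f := (τ • ·)) (x := x) ?_ ?_ ?_)
  · simpa [hperiod] using i.val_lt
  · simpa [hperiod] using j.val_lt
  · simpa [smul_iterate] using hij

theorem natDegree_minpoly_le_finrank {F B : Type*} [Field F] [Field B] [Algebra F B]
    {K : IntermediateField F B} (hK : 0 < finrank F K) {x : B} (hx : x ∈ K) :
    (minpoly F x).natDegree ≤ finrank F K := by
  have : FiniteDimensional F K := Module.finite_of_finrank_pos hK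
  rw [← minpoly_eq ⟨x, hx⟩]
  exact minpoly.natDegree_le (A := F) (⟨x, hx⟩ : K)

theorem finrank_extendScalars_eq {F B : Type*} [Field F] [Field B] [Algebra F B]
    {K M : IntermediateField F B} (hKM : K ≤ M) (hM : 0 < finrank F M) {n : ℕ}
    (hfinrank : finrank F M = finrank F K * n) :
    finrank K (extendScalars hKM) = n :=
  Nat.eq_of_mul_eq_mul_left (Nat.pos_of_mul_pos_right (hfinrank ▸ hM)) <| by
    rw [← hfinrank, ← relfinrank_eq_finrank_of_le,
      finrank_bot_mul_relfinrank hKM]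

variable {F B : Type*} [Field F] [NormedField B] [Algebra F B] {q : ℝ} {p : ℕ}
  {K M : IntermediateField F B} {x y : B}

theorem aroots_minpoly_eq_map_pow_smul [Normal F B] [hp : Fact p.Prime] {τ : B ≃ₐ[F] B}
    (hKM : K ≤ M) (hM : 0 < finrank F M) (hfinrank : finrank F M = finrank F K * p) (hx : x ∈ M)
    (hτK : τ ∈ K.fixingSubgroup) (hτp : τ ^ p • x = x) (hτ : τ • x ≠ x) :
    (minpoly K x).aroots B = Finset.univ.val.map fun j : ZMod p ↦ τ ^ j.val • x := by
  have hp_eq : finrank K (extendScalars hKM) = p :=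
    finrank_extendScalars_eq hKM hM hfinrank
  have hdeg : (minpoly K x).natDegree ≤ p :=
    (natDegree_minpoly_le_finrank (K := extendScalars hKM)
      (hp_eq ▸ hp.out.pos) hx).trans_eq hp_eq
  symm
  refine Multiset.eq_of_le_of_card_le ?_ ?_
  · refine (Multiset.le_iff_subset (Finset.univ.nodup.map (pow_val_smul_injective hτp hτ))).2 ?_
    intro z hz
    obtain ⟨j, -, rfl⟩ := Multiset.mem_map.1 hz
    rw [← isConjRoot_iff_mem_minpoly_aroots (Normal.isIntegral inferInstance x)]
    exact isConjRoot_of_algEquiv x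
      (fixingSubgroupEquiv K ⟨τ ^ j.val, pow_mem hτK _⟩)
  · simpa [ZMod.card] using (card_roots_map_le_natDegree _).trans hdeg

variable [IsUltrametricDist B] [IsIsometricSMul (B ≃ₐ[F] B) B] [Normal F B]

theorem IsUniformizer.norm_map_sub_eq_prod_dist [hp : Fact p.Prime]
    (hF : IsDiscreteNorm F B q) (hKM : K ≤ M) (hfinrank : finrank F M = finrank F K * p)
    (hy : IsUniformizer q K y) (hx : IsUniformizer q M x) {τ : B ≃ₐ[F] B}
    (hτK : τ ∈ K.fixingSubgroup) (hτp : τ ^ p • x = x) (hτ : τ • x ≠ x) (g : B ≃ₐ[F] B) :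
    ‖g y - y‖ = ∏ j : ZMod p, dist ((g * τ ^ j.val) • x) x := by
  rw [hy.norm_map_sub_eq_prod hF hKM hx,
    aroots_minpoly_eq_map_pow_smul hKM hx.finrank_pos hfinrank hx.mem hτK hτp hτ]
  simp [dist_eq_norm, mul_smul]

end Herbrand

/-- For a Galois extension `K' / K` of prime degree inside `B`, this says that its unique lower
ramification jump is `t`: every automorphism over `K` that moves a uniformizer `y` of `K'` moves it
by `‖y‖ ^ (t + 1)`. -/
def IsJump {F B : Type*} [Field F] [NormedField B] [Algebra F B] (q : ℝ)
    (K K' : IntermediateField F B) (t : ℕ) : Prop :=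
  ∀ g ∈ K.fixingSubgroup, ∀ y, IsUniformizer q K' y → g y ≠ y → ‖g y - y‖ = ‖y‖ ^ (t + 1)

section RestrictFixing

variable {F B : Type*} [Field F] [Field B] [Algebra F B] {K K₁ K₂ : IntermediateField F B}

/-- Restriction of the automorphisms of `B` over `K` to a normal extension `K₁` of `K`. -/
noncomputable def restrictFixing (h : K ≤ K₁) [Normal K (extendScalars h)] :
    K.fixingSubgroup →* (extendScalars h ≃ₐ[K] extendScalars h) :=
  (AlgEquiv.restrictNormalHom (extendScalars h)).comp (fixingSubgroupEquiv K).toMonoidHom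

theorem restrictFixing_eq_one_iff (h : K ≤ K₁) [Normal K (extendScalars h)]
    {g : K.fixingSubgroup} : restrictFixing h g = 1 ↔ (g : B ≃ₐ[F] B) ∈ K₁.fixingSubgroup := by
  rw [← MonoidHom.mem_ker, restrictFixing, ← MonoidHom.comap_ker, restrictNormalHom_ker]
  simp [fixingSubgroupEquiv]

theorem restrictFixing_pow_eq_one {p : ℕ} (h : K ≤ K₁) [IsGalois K (extendScalars h)]
    (hpos : 0 < finrank F K₁) (hfinrank : finrank F K₁ = finrank F K * p)
    (g : K.fixingSubgroup) : restrictFixing h g ^ p = 1 := by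
  have hp : finrank K (extendScalars h) = p := finrank_extendScalars_eq h hpos hfinrank
  have : FiniteDimensional K (extendScalars h) :=
    Module.finite_of_finrank_pos (hp ▸ Nat.pos_of_mul_pos_left (hfinrank ▸ hpos))
  rw [← hp, ← IsGalois.card_aut_eq_finrank]
  exact pow_card_eq_one'

variable (h₁ : K ≤ K₁) (h₂ : K ≤ K₂) [Normal K (extendScalars h₁)] [Normal K (extendScalars h₂)]

theorem ker_prod_restrictFixing_le_stabilizer {x : B} (hx : x ∈ K₁ ⊔ K₂) :
    ((restrictFixing h₁).prod (restrictFixing h₂)).ker ≤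
      MulAction.stabilizer K.fixingSubgroup x := fun g hg ↦
  (mem_fixingSubgroup_iff _ (g : B ≃ₐ[F] B)).1 (fixingSubgroup_sup.ge
    ⟨(restrictFixing_eq_one_iff h₁).1 (congrArg Prod.fst hg),
      (restrictFixing_eq_one_iff h₂).1 (congrArg Prod.snd hg)⟩) x hx

theorem commute_prod_restrictFixing {σ τ : K.fixingSubgroup}
    (hσ : (σ : B ≃ₐ[F] B) ∈ K₂.fixingSubgroup) (hτ : (τ : B ≃ₐ[F] B) ∈ K₁.fixingSubgroup) :
    Commute ((restrictFixing h₁).prod (restrictFixing h₂) σ)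
      ((restrictFixing h₁).prod (restrictFixing h₂) τ) :=
  Prod.ext (by simp [(restrictFixing_eq_one_iff h₁).2 hτ])
    (by simp [(restrictFixing_eq_one_iff h₂).2 hσ])

end RestrictFixing

section Square

variable {F B : Type*} [Field F] [NormedField B] [Algebra F B] [IsUltrametricDist B] {q : ℝ} {p : ℕ}
  {K K₁ K₂ : IntermediateField F B} {x y y₁ y₂ : B}

theorem IsUniformizer.exists_algEquiv_ne [IsGalois F B] (hF : IsDiscreteNorm F B q)
    (hK₂ : IsUniformizer q K₂ y) (h : ¬K₂ ≤ K₁) : ∃ g ∈ K₁.fixingSubgroup, g y ≠ y := by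
  by_contra! hfix
  refine h fun z hz ↦ ?_
  rw [← InfiniteGalois.fixedField_fixingSubgroup K₁, mem_fixedField_iff]
  exact fun g hg ↦ hK₂.mem_fixingSubgroup hF (hfix g hg) ⟨z, hz⟩

variable [IsIsometricSMul (B ≃ₐ[F] B) B]

theorem IsUniformizer.isJump (hF : IsDiscreteNorm F B q) (hy : IsUniformizer q K₁ y) {t : ℕ}
    (h : ∀ g ∈ K.fixingSubgroup, g y ≠ y → ‖g y - y‖ = ‖y‖ ^ (t + 1)) : IsJump q K K₁ t := by
  intro g hg z hz hgz
  have hgy : g y ≠ y := fun hgy ↦ hgz (hy.mem_fixingSubgroup hF hgy ⟨z, hz.mem⟩)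
  rw [hz.norm_eq hy, ← h g hg hgy]
  exact (hy.norm_map_sub_le hF g hz.mem (hz.norm_lt_one hF).le).antisymm
    (hz.norm_map_sub_le hF g hy.mem (hy.norm_lt_one hF).le)

theorem eq_pow_of_pow_eq_of_mul_pow_eq {r a b : ℝ} (hr : 0 < r) (ha : 0 ≤ a) (hp : p ≠ 0)
    {t₁ t₂ : ℕ} (hle : t₁ ≤ t₂) (hap : a ^ p = (r ^ p) ^ (t₁ + 1))
    (hba : b * a ^ (p - 1) = (r ^ p) ^ (t₂ + 1)) :
    a = r ^ (t₁ + 1) ∧ b = r ^ (t₁ + p * (t₂ - t₁) + 1) := by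
  rw [pow_right_comm] at hap
  obtain rfl : a = r ^ (t₁ + 1) := (pow_left_inj₀ ha (by positivity) hp).1 hap
  refine ⟨rfl, mul_right_cancel₀ (pow_ne_zero (p - 1) (pow_ne_zero (t₁ + 1) hr.ne')) ?_⟩
  rw [hba, ← pow_mul, ← pow_mul, ← pow_add]
  obtain ⟨d, rfl⟩ := Nat.exists_eq_add_of_le hle
  obtain ⟨n, rfl⟩ := Nat.exists_eq_succ_of_ne_zero hp
  congr 1
  simp only [Nat.add_sub_cancel_left, Nat.succ_eq_add_one, Nat.add_sub_cancel]
  ring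

theorem norm_map_sub_of_square [Normal F B] [hp : Fact p.Prime] (hF : IsDiscreteNorm F B q)
    (h₁ : K ≤ K₁) (h₂ : K ≤ K₂) [IsGalois K (extendScalars h₁)] [IsGalois K (extendScalars h₂)]
    (hfinrank₁ : finrank F K₁ = finrank F K * p) (hfinrank₂ : finrank F K₂ = finrank F K * p)
    (hfinrank : finrank F ↥(K₁ ⊔ K₂) = finrank F K * p * p) (hy₁ : IsUniformizer q K₁ y₁)
    (hy₂ : IsUniformizer q K₂ y₂) (hx : IsUniformizer q (K₁ ⊔ K₂) x) {t₁ t₂ : ℕ}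
    (ht₁ : IsJump q K K₁ t₁) (ht₂ : IsJump q K K₂ t₂) (hlt : t₁ < t₂) {σ τ : B ≃ₐ[F] B}
    (hσ : σ ∈ K₂.fixingSubgroup) (hσx : σ x ≠ x) (hτ : τ ∈ K₁.fixingSubgroup) (hτx : τ x ≠ x) :
    ‖σ x - x‖ = ‖x‖ ^ (t₁ + 1) ∧ ‖τ x - x‖ = ‖x‖ ^ (t₁ + p * (t₂ - t₁) + 1) := by
  have : IsIsometricSMul K.fixingSubgroup B := ⟨fun g ↦ isometry_smul B (g : B ≃ₐ[F] B)⟩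
  have hfix (g : B ≃ₐ[F] B) (hg₁ : g ∈ K₁.fixingSubgroup) (hg₂ : g ∈ K₂.fixingSubgroup) :
      g x = x := (mem_fixingSubgroup_iff _ g).1 (fixingSubgroup_sup.ge ⟨hg₁, hg₂⟩) x hx.mem
  have hσy : σ y₁ ≠ y₁ := fun h ↦ hσx (hfix σ (hy₁.mem_fixingSubgroup hF h) hσ)
  have hτy : τ y₂ ≠ y₂ := fun h ↦ hτx (hfix τ hτ (hy₂.mem_fixingSubgroup hF h))
  have hM₁ : finrank F ↥(K₁ ⊔ K₂) = finrank F K₁ * p := hfinrank₁ ▸ hfinrank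
  have hM₂ : finrank F ↥(K₁ ⊔ K₂) = finrank F K₂ * p := hfinrank₂ ▸ hfinrank
  let f := (restrictFixing h₁).prod (restrictFixing h₂)
  let σ' : K.fixingSubgroup := ⟨σ, fixingSubgroup_antitone h₂ hσ⟩
  let τ' : K.fixingSubgroup := ⟨τ, fixingSubgroup_antitone h₁ hτ⟩
  have hker : f.ker ≤ MulAction.stabilizer K.fixingSubgroup x :=
    ker_prod_restrictFixing_le_stabilizer h₁ h₂ hx.mem
  have hcomm : Commute (f σ') (f τ') := commute_prod_restrictFixing h₁ h₂ hσ hτ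
  have hfp (g) : f g ^ p = 1 := Prod.ext
    (restrictFixing_pow_eq_one h₁ hy₁.finrank_pos hfinrank₁ g)
    (restrictFixing_pow_eq_one h₂ hy₂.finrank_pos hfinrank₂ g)
  have hpow (g : K.fixingSubgroup) : g ^ p • x = x := hker ((map_pow f g p).trans (hfp g))
  have hy₁prod : (‖x‖ ^ p) ^ (t₁ + 1) = ∏ j : ZMod p, dist ((σ' * τ' ^ j.val) • x) x := by
    rw [← hy₁.norm_eq_pow hx hM₁, ← ht₁ σ σ'.2 y₁ hy₁ hσy]
    exact hy₁.norm_map_sub_eq_prod_dist hF le_sup_left hM₁ hx hτ (hpow τ') hτx σ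
  have hy₂prod : (‖x‖ ^ p) ^ (t₂ + 1) = ∏ j : ZMod p, dist ((τ' * σ' ^ j.val) • x) x := by
    rw [← hy₂.norm_eq_pow hx hM₂, ← ht₂ τ τ'.2 y₂ hy₂ hτy]
    exact hy₂.norm_map_sub_eq_prod_dist hF le_sup_right hM₂ hx hσ (hpow σ') hσx τ
  have hr := pow_pos (hx.norm_pos hF) p
  have hr1 := pow_lt_one₀ (norm_nonneg x) (hx.norm_lt_one hF) hp.out.ne_zero
  obtain ⟨hσd, hτd⟩ := prod_dist_mul_pow_smul_of_lt hker hcomm (hfp σ') (hfp τ') <| by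
    rw [← hy₁prod, ← hy₂prod]
    exact pow_lt_pow_right_of_lt_one₀ hr hr1 (by lia)
  rw [← dist_eq_norm, ← dist_eq_norm]
  exact eq_pow_of_pow_eq_of_mul_pow_eq (hx.norm_pos hF) dist_nonneg hp.out.ne_zero hlt.le
    (hσd.symm.trans hy₁prod.symm) (hτd.symm.trans hy₂prod.symm)

theorem IsJump.square [IsGalois F B] [hp : Fact p.Prime] (hF : IsDiscreteNorm F B q)
    (h₁ : K ≤ K₁) (h₂ : K ≤ K₂) [IsGalois K (extendScalars h₁)] [IsGalois K (extendScalars h₂)]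
    (hfinrank₁ : finrank F K₁ = finrank F K * p) (hfinrank₂ : finrank F K₂ = finrank F K * p)
    (hfinrank : finrank F ↥(K₁ ⊔ K₂) = finrank F K * p * p) (hy₁ : IsUniformizer q K₁ y₁)
    (hy₂ : IsUniformizer q K₂ y₂) (hx : IsUniformizer q (K₁ ⊔ K₂) x) {t₁ t₂ : ℕ}
    (ht₁ : IsJump q K K₁ t₁) (ht₂ : IsJump q K K₂ t₂) (hlt : t₁ < t₂) :
    IsJump q K₂ (K₁ ⊔ K₂) t₁ ∧ IsJump q K₁ (K₁ ⊔ K₂) (t₁ + p * (t₂ - t₁)) := by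
  have hnot {K' : IntermediateField F B} (hpos : 0 < finrank F K')
      (hK' : finrank F K' = finrank F K * p) : ¬K₁ ⊔ K₂ ≤ K' := fun hle ↦ by
    have : FiniteDimensional F K' := Module.finite_of_finrank_pos hpos
    have hle_finrank := finrank_le_of_le_right (K := F) hle
    rw [hfinrank, ← hK'] at hle_finrank
    exact (lt_mul_of_one_lt_right hpos hp.out.one_lt).not_ge hle_finrank
  obtain ⟨σ, hσ, hσx⟩ := hx.exists_algEquiv_ne hF (hnot hy₂.finrank_pos hfinrank₂)
  obtain ⟨τ, hτ, hτx⟩ := hx.exists_algEquiv_ne hF (hnot hy₁.finrank_pos hfinrank₁)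
  have hsquare {σ τ : B ≃ₐ[F] B} := norm_map_sub_of_square hF h₁ h₂ hfinrank₁ hfinrank₂ hfinrank
    hy₁ hy₂ hx ht₁ ht₂ hlt (σ := σ) (τ := τ)
  exact ⟨hx.isJump hF fun g hg hgx ↦ (hsquare hg hgx hτ hτx).1,
    hx.isJump hF fun g hg hgx ↦ (hsquare hσ hσx hg hgx).2⟩

end Square

/-- A grid of fields `K k s` between `F` and `B`, each having a uniformizer, in which every step
`K k s ≤ K (k + 1) s` and `K k s ≤ K k (s + 1)` is a Galois extension of degree `p` and every unit
square is a compositum. -/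
structure IsGaloisGrid {F B : Type*} [Field F] [NormedField B] [Algebra F B] (p : ℕ) (q : ℝ)
    (K : ℕ → ℕ → IntermediateField F B) : Prop where
  le_left : ∀ k s, K k s ≤ K (k + 1) s
  le_right : ∀ k s, K k s ≤ K k (s + 1)
  isGalois_left : ∀ k s, IsGalois (K k s) (extendScalars (le_left k s))
  isGalois_right : ∀ k s, IsGalois (K k s) (extendScalars (le_right k s))
  finrank_left : ∀ k s, finrank F (K (k + 1) s) = finrank F (K k s) * p
  finrank_right : ∀ k s, finrank F (K k (s + 1)) = finrank F (K k s) * p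
  sup_eq : ∀ k s, K (k + 1) s ⊔ K k (s + 1) = K (k + 1) (s + 1)
  exists_isUniformizer : ∀ k s, ∃ y, IsUniformizer q (K k s) y

/-- The equations satisfied by the jump `t` of the step from `(k, s)` to `(k + 1, s)` in a grid with
jumps `p ^ (k + 1) - 1` along the edge `s = 0` and `p ^ (s + 1)` along the edge `k = 0`. -/
structure IsLeftJumpValue (p k s t : ℕ) : Prop where
  of_le : s ≤ k → (p + 1) * t + 2 * p ^ (2 * s + 1) + 1 = (p + 1) * p ^ (k + s + 1) + p
  of_ge : k ≤ s → (p + 1) * t + p ^ (2 * k + 1) + 1 = p ^ (2 * k + 2) + p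

/-- The equations satisfied by the jump `t` of the step from `(k, s)` to `(k, s + 1)` in the same
grid. -/
structure IsRightJumpValue (p k s t : ℕ) : Prop where
  of_le : k ≤ s + 1 →
    (p + 1) * t + p ^ (2 * k + 1) + 1 = (p + 1) * p ^ (k + s + 1) + p ^ (2 * k) + p
  of_gt : s < k → (p + 1) * t + 1 = 2 * p ^ (2 * s + 2) + p

section JumpValues

variable {p k s t₁ t₂ d : ℕ}

theorem isLeftJumpValue_zero (hp : 0 < p) (k : ℕ) : IsLeftJumpValue p k 0 (p ^ (k + 1) - 1) := by
  obtain ⟨n, hn⟩ := Nat.exists_eq_add_of_le' (Nat.pow_pos hp : 0 < p ^ (k + 1))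
  rw [hn, Nat.add_sub_cancel]
  refine ⟨fun _ ↦ ?_, fun hk ↦ ?_⟩
  · rw [add_zero, hn]
    ring
  · obtain rfl := Nat.le_zero.1 hk
    zify at hn ⊢
    linear_combination (-(p : ℤ) - 1) * hn

theorem isRightJumpValue_zero (p s : ℕ) : IsRightJumpValue p 0 s (p ^ (s + 1)) where
  of_le _ := by ring
  of_gt h := by lia

namespace IsLeftJumpValue

theorem lt_of_le (hp : 2 < p) (hks : k ≤ s) (h₁ : IsLeftJumpValue p k s t₁)
    (h₂ : IsRightJumpValue p k s t₂) : t₁ < t₂ := by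
  have e₁ := h₁.of_ge hks
  have e₂ := h₂.of_le (by lia)
  have hpow : p ^ (2 * k + 1) ≤ p ^ (k + s + 1) := Nat.pow_le_pow_right (by lia) (by lia)
  have hpos : 0 < p ^ (2 * k) := Nat.pow_pos (by lia)
  rw [pow_succ p (2 * k + 1)] at e₁
  by_contra! hle
  linarith [Nat.mul_le_mul_left (p + 1) hpow, Nat.mul_le_mul_left (p + 1) hle,
    Nat.zero_le (p ^ (2 * k + 1))]

theorem gt_of_gt (hp : 2 < p) (hsk : s < k) (h₁ : IsLeftJumpValue p k s t₁)
    (h₂ : IsRightJumpValue p k s t₂) : t₂ < t₁ := by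
  have e₁ := h₁.of_le hsk.le
  have e₂ := h₂.of_gt hsk
  have hpow : p ^ (2 * s + 1) * p ≤ p ^ (k + s + 1) :=
    (pow_succ p (2 * s + 1)).ge.trans (Nat.pow_le_pow_right (by lia) (by lia))
  have hpos : 0 < (p + 1) * p ^ (2 * s + 1) := by positivity
  rw [pow_succ p (2 * s + 1)] at e₂
  by_contra! hle
  linarith [Nat.mul_le_mul_left (p + 1) hpow, Nat.mul_le_mul_left (p + 1) hle,
    Nat.mul_le_mul_right ((p + 1) * p ^ (2 * s + 1)) hp]

theorem succ_of_le (hks : k ≤ s) (h₁ : IsLeftJumpValue p k s t₁)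
    (h₂ : IsRightJumpValue p k s (t₁ + d)) :
    IsLeftJumpValue p k (s + 1) t₁ ∧ IsRightJumpValue p (k + 1) s (t₁ + p * d) := by
  have e₁ := h₁.of_ge hks
  have e₂ := h₂.of_le (by lia)
  have e₂' : (p + 1) * (t₁ + p * d) + p ^ (2 * (k + 1) + 1) + 1 =
      (p + 1) * p ^ (k + 1 + s + 1) + p ^ (2 * (k + 1)) + p := by
    zify at e₁ e₂ ⊢
    linear_combination (1 - (p : ℤ)) * e₁ + p * e₂
  refine ⟨⟨fun h ↦ by lia, fun _ ↦ e₁⟩, fun _ ↦ e₂', fun h ↦ ?_⟩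
  obtain rfl : k = s := by lia
  zify at e₂' ⊢
  linear_combination e₂'

theorem succ_of_gt (hsk : s < k) (h₁ : IsLeftJumpValue p k s (t₂ + d))
    (h₂ : IsRightJumpValue p k s t₂) :
    IsLeftJumpValue p k (s + 1) (t₂ + p * d) ∧ IsRightJumpValue p (k + 1) s t₂ := by
  have e₁ := h₁.of_le hsk.le
  have e₂ := h₂.of_gt hsk
  have e₁' : (p + 1) * (t₂ + p * d) + 2 * p ^ (2 * (s + 1) + 1) + 1 =
      (p + 1) * p ^ (k + (s + 1) + 1) + p := by
    zify at e₁ e₂ ⊢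
    linear_combination (1 - (p : ℤ)) * e₂ + p * e₁
  refine ⟨⟨fun _ ↦ e₁', fun h ↦ ?_⟩, fun h ↦ by lia, fun _ ↦ e₂⟩
  obtain rfl : k = s + 1 := by lia
  zify at e₁' ⊢
  linear_combination e₁'

end IsLeftJumpValue

end JumpValues

theorem forall_of_forall_zero_of_square {P Q : ℕ → ℕ → Prop} (hP : ∀ k, P k 0) (hQ : ∀ s, Q 0 s)
    (hsquare : ∀ k s, P k s → Q k s → P k (s + 1) ∧ Q (k + 1) s) (k s : ℕ) : P k s ∧ Q k s := by
  have hrow {s : ℕ} (hPs : ∀ k, P k s) (k : ℕ) : P k s ∧ Q k s := by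
    refine ⟨hPs k, ?_⟩
    induction k with
    | zero => exact hQ s
    | succ k ih => exact (hsquare k s (hPs k) ih).2
  refine hrow (fun k ↦ ?_) k
  induction s generalizing k with
  | zero => exact hP k
  | succ s ih => exact (hsquare k s (ih k) (hrow ih k).2).1

namespace IsGaloisGrid

variable {F B : Type*} [Field F] [NormedField B] [Algebra F B] {p : ℕ} {q : ℝ}
  {K : ℕ → ℕ → IntermediateField F B}

theorem swap (hK : IsGaloisGrid p q K) : IsGaloisGrid p q fun k s ↦ K s k where
  le_left k s := hK.le_right s k
  le_right k s := hK.le_left s k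
  isGalois_left k s := hK.isGalois_right s k
  isGalois_right k s := hK.isGalois_left s k
  finrank_left k s := hK.finrank_right s k
  finrank_right k s := hK.finrank_left s k
  sup_eq k s := (sup_comm _ _).trans (hK.sup_eq s k)
  exists_isUniformizer k s := hK.exists_isUniformizer s k

variable [IsUltrametricDist B] [IsIsometricSMul (B ≃ₐ[F] B) B] [IsGalois F B] [hp : Fact p.Prime]

theorem isJump_succ (hK : IsGaloisGrid p q K) (hF : IsDiscreteNorm F B q) {k s t₁ t₂ : ℕ}
    (h₁ : IsJump q (K k s) (K (k + 1) s) t₁) (h₂ : IsJump q (K k s) (K k (s + 1)) t₂)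
    (hlt : t₁ < t₂) :
    IsJump q (K k (s + 1)) (K (k + 1) (s + 1)) t₁ ∧
      IsJump q (K (k + 1) s) (K (k + 1) (s + 1)) (t₁ + p * (t₂ - t₁)) := by
  have := hK.isGalois_left k s
  have := hK.isGalois_right k s
  obtain ⟨y₁, hy₁⟩ := hK.exists_isUniformizer (k + 1) s
  obtain ⟨y₂, hy₂⟩ := hK.exists_isUniformizer k (s + 1)
  obtain ⟨x, hx⟩ := hK.exists_isUniformizer (k + 1) (s + 1)
  have hfinrank := hK.finrank_left k s ▸ hK.finrank_right (k + 1) s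
  rw [← hK.sup_eq] at hx hfinrank ⊢
  exact h₁.square hF (hK.le_left k s) (hK.le_right k s) (hK.finrank_left k s)
    (hK.finrank_right k s) hfinrank hy₁ hy₂ hx h₂ hlt

theorem exists_isJump (hK : IsGaloisGrid p q K) (hF : IsDiscreteNorm F B q) (hp2 : 2 < p)
    (hleft : ∀ k, IsJump q (K k 0) (K (k + 1) 0) (p ^ (k + 1) - 1))
    (hright : ∀ s, IsJump q (K 0 s) (K 0 (s + 1)) (p ^ (s + 1))) (k s : ℕ) :
    (∃ t, IsJump q (K k s) (K (k + 1) s) t ∧ IsLeftJumpValue p k s t) ∧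
      ∃ t, IsJump q (K k s) (K k (s + 1)) t ∧ IsRightJumpValue p k s t := by
  revert k s
  refine forall_of_forall_zero_of_square
    (fun k ↦ ⟨_, hleft k, isLeftJumpValue_zero hp.out.pos k⟩)
    (fun s ↦ ⟨_, hright s, isRightJumpValue_zero p s⟩) ?_
  rintro k s ⟨t₁, h₁, e₁⟩ ⟨t₂, h₂, e₂⟩
  rcases le_or_gt k s with hks | hsk
  · have hlt := e₁.lt_of_le hp2 hks e₂
    obtain ⟨d, rfl⟩ := Nat.exists_eq_add_of_le hlt.le
    obtain ⟨j₁, j₂⟩ := hK.isJump_succ hF h₁ h₂ hlt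
    obtain ⟨e₁', e₂'⟩ := e₁.succ_of_le hks e₂
    rw [Nat.add_sub_cancel_left] at j₂
    exact ⟨⟨_, j₁, e₁'⟩, _, j₂, e₂'⟩
  · have hlt := e₁.gt_of_gt hp2 hsk e₂
    obtain ⟨d, rfl⟩ := Nat.exists_eq_add_of_le hlt.le
    obtain ⟨j₂, j₁⟩ := hK.swap.isJump_succ hF h₂ h₁ hlt
    obtain ⟨e₁', e₂'⟩ := e₁.succ_of_gt hsk e₂
    rw [Nat.add_sub_cancel_left] at j₁
    exact ⟨⟨_, j₁, e₁'⟩, _, j₂, e₂'⟩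

end IsGaloisGrid

section PthRoots

variable {F B : Type*} [Field F] [Field B] [Algebra F B] {p : ℕ} {K : IntermediateField F B}
  {b : B}

theorem div_pow_eq_one_of_mem_fixingSubgroup (hb : b ≠ 0) (hbK : b ^ p ∈ K) {g : B ≃ₐ[F] B}
    (hg : g ∈ K.fixingSubgroup) : (g b / b) ^ p = 1 := by
  rw [div_pow, ← map_pow, (mem_fixingSubgroup_iff K g).1 hg _ hbK, div_self (pow_ne_zero p hb)]

theorem isGalois_adjoin_simple_of_pow_mem [IsGalois F B] (hμ : ∀ ω : B, ω ^ p = 1 → ω ∈ K)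
    (hb : b ≠ 0) (hbK : b ^ p ∈ K) : IsGalois K K⟮b⟯ := by
  have : Algebra.IsSeparable K K⟮b⟯ := Algebra.isSeparable_tower_bot_of_isSeparable K K⟮b⟯ B
  have : Normal K K⟮b⟯ := by
    refine normal_iff_forall_map_le'.2 fun g ↦ ?_
    rw [adjoin_map, Set.image_singleton, adjoin_simple_le_iff]
    have hω : g b / b ∈ K := hμ _ <| by
      have hgb : g (b ^ p) = b ^ p := g.commutes ⟨_, hbK⟩
      rw [div_pow, ← map_pow, hgb, div_self (pow_ne_zero p hb)]
    have hgb : g b = (⟨_, hω⟩ : K) • b := (div_mul_cancel₀ (g b) hb).symm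
    exact hgb ▸ K⟮b⟯.smul_mem (mem_adjoin_simple_self K b)
  constructor

theorem isGalois_extendScalars_of_pow_mem [IsGalois F B] {K' : IntermediateField F B}
    (h : K ≤ K') (hK' : K' = K ⊔ F⟮b⟯) (hμ : ∀ ω : B, ω ^ p = 1 → ω ∈ K) (hb : b ≠ 0)
    (hbK : b ^ p ∈ K) : IsGalois K (extendScalars h) := by
  have hadjoin : extendScalars h = K⟮b⟯ := by
    refine restrictScalars_injective F ?_
    rw [restrictScalars_adjoin_eq_sup, extendScalars_restrictScalars, hK']
  exact hadjoin ▸ isGalois_adjoin_simple_of_pow_mem hμ hb hbK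

end PthRoots

section RootsOfUnity

variable {B : Type*} [NormedField B]

theorem exists_norm_zpow_mul_zpow_pow_eq {a b : B} {n i j : ℕ} {q : ℝ} (hq : 0 < q)
    (ha : ‖a‖ ^ n = q ^ i) (hb : ‖b‖ ^ n = q ^ j) (hij : i.Coprime j) :
    ∃ k l : ℤ, ‖a ^ k * b ^ l‖ ^ n = q := by
  refine ⟨i.gcdA j, i.gcdB j, ?_⟩
  calc ‖a ^ i.gcdA j * b ^ i.gcdB j‖ ^ n
      = (‖a‖ ^ n) ^ i.gcdA j * (‖b‖ ^ n) ^ i.gcdB j := by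
        rw [norm_mul, mul_pow, norm_zpow, norm_zpow, ← zpow_natCast, ← zpow_natCast, zpow_comm,
          zpow_comm ‖b‖, zpow_natCast, zpow_natCast]
    _ = q ^ (i * i.gcdA j + j * i.gcdB j) := by
        rw [ha, hb, zpow_add₀ hq.ne', zpow_mul, zpow_mul, zpow_natCast, zpow_natCast]
    _ = q := by rw [← Nat.gcd_eq_gcd_ab, hij, Nat.cast_one, zpow_one]

variable [IsUltrametricDist B]

theorem norm_sub_one_le_of_isPrimitiveRoot {n : ℕ} (hn : n ≠ 0) {ζ ω : B}
    (hζ : IsPrimitiveRoot ζ n) (hω : ω ^ n = 1) : ‖ω - 1‖ ≤ ‖ζ - 1‖ := by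
  have : NeZero n := ⟨hn⟩
  obtain ⟨i, -, rfl⟩ := hζ.eq_pow_of_pow_eq_one hω
  simpa using norm_pow_sub_pow_le (hζ.isOfFinOrder hn).norm_eq_one.le norm_one.le i

variable {p : ℕ} [hp : Fact p.Prime]

theorem norm_sub_one_pow_of_isPrimitiveRoot {k : ℕ} {ζ : B}
    (hζ : IsPrimitiveRoot ζ (p ^ (k + 1))) : ‖ζ - 1‖ ^ ((p - 1) * p ^ k) = ‖(p : B)‖ := by
  have hn : p ^ (k + 1) ≠ 0 := pow_ne_zero _ hp.out.ne_zero
  have hnorm : ∀ ω ∈ primitiveRoots (p ^ (k + 1)) B, ‖1 - ω‖ = ‖ζ - 1‖ := fun ω hω ↦ by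
    have hω := isPrimitiveRoot_of_mem_primitiveRoots hω
    rw [norm_sub_rev]
    exact (norm_sub_one_le_of_isPrimitiveRoot hn hζ hω.pow_eq_one).antisymm
      (norm_sub_one_le_of_isPrimitiveRoot hn hω hζ.pow_eq_one)
  have heval := Polynomial.eval_one_cyclotomic_prime_pow (R := B) (p := p) k
  rw [cyclotomic_eq_prod_X_sub_primitiveRoots hζ, eval_prod] at heval
  simp only [eval_sub, eval_X, eval_C] at heval
  rw [← heval, norm_prod, Finset.prod_congr rfl hnorm, Finset.prod_const, hζ.card_primitiveRoots,
    Nat.totient_prime_pow_succ hp.out, mul_comm]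

theorem IsUniformizer.norm_sub_one_eq_pow {F : Type*} [Field F] [Algebra F B]
    {K : IntermediateField F B} {x ω : B} {m : ℕ} (hx : IsUniformizer ‖(p : B)‖ K x)
    (hfinrank : finrank F K = (p - 1) * m) (hω : ω ^ p = 1) (hω1 : ω ≠ 1) :
    ‖ω - 1‖ = ‖x‖ ^ m := by
  have hprim : IsPrimitiveRoot ω (p ^ (0 + 1)) := by
    rw [zero_add, pow_one]
    exact IsPrimitiveRoot.iff_orderOf.2 (orderOf_eq_prime hω hω1)
  have hp1 : p - 1 ≠ 0 := (Nat.sub_pos_of_lt hp.out.one_lt).ne'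
  rw [← pow_left_inj₀ (norm_nonneg _) (by positivity) hp1, ← pow_mul, mul_comm m, ← hfinrank,
    hx.norm_pow_finrank, ← norm_sub_one_pow_of_isPrimitiveRoot hprim, pow_zero, mul_one]

end RootsOfUnity

/-- The field `F(ζ r, α s)`, for sequences of successive `p`-th roots `ζ` of `1` and `α` of an
element of `F`. -/
def kummerField (F : Type*) {B : Type*} [Field F] [Field B] [Algebra F B] (ζ α : ℕ → B)
    (r s : ℕ) : IntermediateField F B :=
  adjoin F {ζ r, α s}

section KummerField

variable {F B : Type*} [Field F] [Field B] [Algebra F B] {ζ α : ℕ → B}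

theorem kummerField_le_iff {r s : ℕ} {K : IntermediateField F B} :
    kummerField F ζ α r s ≤ K ↔ ζ r ∈ K ∧ α s ∈ K := by
  simp [kummerField, adjoin_le_iff, Set.pair_subset_iff]

theorem zeta_mem_kummerField (r s : ℕ) : ζ r ∈ kummerField F ζ α r s :=
  (kummerField_le_iff.1 le_rfl).1

theorem alpha_mem_kummerField (r s : ℕ) : α s ∈ kummerField F ζ α r s :=
  (kummerField_le_iff.1 le_rfl).2

theorem map_kummerField {B' : Type*} [Field B'] [Algebra F B'] (φ : B →ₐ[F] B') (r s : ℕ) :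
    (kummerField F ζ α r s).map φ = kummerField F (φ ∘ ζ) (φ ∘ α) r s := by
  rw [kummerField, adjoin_map, Set.image_pair]
  rfl

end KummerField

/-- The standing hypotheses on the fields `F(ζ r, α s)` with `r ≥ 1`, inside a valued field `B`: the
absolute value of `p` is that of a uniformizer of `F`, the element `α 0` has valuation `v` prime to
`p`, and the fields are totally ramified over `F` of the largest possible degree. -/
structure IsKummerGrid (F : Type*) {B : Type*} [Field F] [NormedField B] [Algebra F B] (p v : ℕ)
    (ζ α : ℕ → B) : Prop where
  isDiscreteNorm : IsDiscreteNorm F B ‖(p : B)‖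
  isPrimitiveRoot : ∀ r, IsPrimitiveRoot (ζ r) (p ^ r)
  zeta_pow : ∀ r, ζ (r + 1) ^ p = ζ r
  alpha_pow : ∀ s, α (s + 1) ^ p = α s
  norm_alpha_zero : ‖α 0‖ = ‖(p : B)‖ ^ v
  not_dvd : ¬p ∣ v
  finrank_eq : ∀ k s, finrank F (kummerField F ζ α (k + 1) s) = (p - 1) * p ^ (k + s)
  exists_isUniformizer : ∀ k s, ∃ y, IsUniformizer ‖(p : B)‖ (kummerField F ζ α (k + 1) s) y

namespace IsKummerGrid

variable {F B : Type*} [Field F] [NormedField B] [Algebra F B] {p v : ℕ} {ζ α : ℕ → B}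

theorem zeta_pow_mem (h : IsKummerGrid F p v ζ α) (r s : ℕ) :
    ζ (r + 1) ^ p ∈ kummerField F ζ α r s :=
  h.zeta_pow r ▸ zeta_mem_kummerField r s

theorem alpha_pow_mem (h : IsKummerGrid F p v ζ α) (r s : ℕ) :
    α (s + 1) ^ p ∈ kummerField F ζ α r s :=
  h.alpha_pow s ▸ alpha_mem_kummerField r s

theorem le_left (h : IsKummerGrid F p v ζ α) (r s : ℕ) :
    kummerField F ζ α r s ≤ kummerField F ζ α (r + 1) s :=
  kummerField_le_iff.2
    ⟨h.zeta_pow r ▸ pow_mem (zeta_mem_kummerField _ _) p, alpha_mem_kummerField _ _⟩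

theorem le_right (h : IsKummerGrid F p v ζ α) (r s : ℕ) :
    kummerField F ζ α r s ≤ kummerField F ζ α r (s + 1) :=
  kummerField_le_iff.2
    ⟨zeta_mem_kummerField _ _, h.alpha_pow s ▸ pow_mem (alpha_mem_kummerField _ _) p⟩

theorem succ_left_eq_sup (h : IsKummerGrid F p v ζ α) (r s : ℕ) :
    kummerField F ζ α (r + 1) s = kummerField F ζ α r s ⊔ F⟮ζ (r + 1)⟯ :=
  le_antisymm
    (kummerField_le_iff.2 ⟨SetLike.le_def.1 le_sup_right (mem_adjoin_simple_self F _),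
      SetLike.le_def.1 le_sup_left (alpha_mem_kummerField _ _)⟩)
    (sup_le (h.le_left r s) (adjoin_simple_le_iff.2 (zeta_mem_kummerField _ _)))

theorem succ_right_eq_sup (h : IsKummerGrid F p v ζ α) (r s : ℕ) :
    kummerField F ζ α r (s + 1) = kummerField F ζ α r s ⊔ F⟮α (s + 1)⟯ :=
  le_antisymm
    (kummerField_le_iff.2 ⟨SetLike.le_def.1 le_sup_left (zeta_mem_kummerField _ _),
      SetLike.le_def.1 le_sup_right (mem_adjoin_simple_self F _)⟩)
    (sup_le (h.le_right r s) (adjoin_simple_le_iff.2 (alpha_mem_kummerField _ _)))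

theorem norm_alpha_pow (h : IsKummerGrid F p v ζ α) (s : ℕ) :
    ‖α s‖ ^ p ^ s = ‖(p : B)‖ ^ v := by
  induction s with
  | zero => simpa using h.norm_alpha_zero
  | succ s ih => rw [pow_succ', pow_mul, ← norm_pow, h.alpha_pow, ih]

variable [hp : Fact p.Prime]

theorem zeta_ne_zero (h : IsKummerGrid F p v ζ α) (r : ℕ) : ζ r ≠ 0 :=
  (h.isPrimitiveRoot r).ne_zero (pow_ne_zero r hp.out.ne_zero)

theorem alpha_ne_zero (h : IsKummerGrid F p v ζ α) (s : ℕ) : α s ≠ 0 := by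
  intro h0
  have hpow := h.norm_alpha_pow s
  rw [h0, norm_zero, zero_pow (pow_ne_zero s hp.out.ne_zero)] at hpow
  exact (pow_pos h.isDiscreteNorm.pos v).ne hpow

theorem mem_of_pow_eq_one (h : IsKummerGrid F p v ζ α) (k s : ℕ) {ω : B} (hω : ω ^ p = 1) :
    ω ∈ kummerField F ζ α (k + 1) s := by
  have hζ : ζ 1 ∈ kummerField F ζ α (k + 1) s := by
    induction k with
    | zero => exact zeta_mem_kummerField _ _
    | succ k ih => exact h.le_left (k + 1) s ih
  have : NeZero p := ⟨hp.out.ne_zero⟩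
  obtain ⟨i, -, rfl⟩ := (pow_one p ▸ h.isPrimitiveRoot 1).eq_pow_of_pow_eq_one hω
  exact pow_mem hζ i

theorem isGaloisGrid [IsGalois F B] (h : IsKummerGrid F p v ζ α) :
    IsGaloisGrid p ‖(p : B)‖ fun k s ↦ kummerField F ζ α (k + 1) s where
  le_left k s := h.le_left (k + 1) s
  le_right k s := h.le_right (k + 1) s
  isGalois_left k s := isGalois_extendScalars_of_pow_mem _ (h.succ_left_eq_sup (k + 1) s)
    (fun _ ↦ h.mem_of_pow_eq_one k s) (h.zeta_ne_zero _) (h.zeta_pow_mem _ _)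
  isGalois_right k s := isGalois_extendScalars_of_pow_mem _ (h.succ_right_eq_sup (k + 1) s)
    (fun _ ↦ h.mem_of_pow_eq_one k s) (h.alpha_ne_zero _) (h.alpha_pow_mem _ _)
  finrank_left k s := by rw [h.finrank_eq, h.finrank_eq]; ring
  finrank_right k s := by rw [h.finrank_eq, h.finrank_eq]; ring
  sup_eq k s := le_antisymm (sup_le (h.le_right _ _) (h.le_left _ _))
    (kummerField_le_iff.2 ⟨SetLike.le_def.1 le_sup_left (zeta_mem_kummerField _ _),
      SetLike.le_def.1 le_sup_right (alpha_mem_kummerField _ _)⟩)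
  exists_isUniformizer := h.exists_isUniformizer

variable [IsUltrametricDist B]

theorem exists_isUniformizer_zpow_mul_zpow (h : IsKummerGrid F p v ζ α) (s : ℕ) :
    ∃ i j : ℤ, IsUniformizer ‖(p : B)‖ (kummerField F ζ α 1 s) (α s ^ i * (ζ 1 - 1) ^ j) := by
  have hfinrank : finrank F (kummerField F ζ α 1 s) = p ^ s * (p - 1) := by
    simpa [mul_comm] using h.finrank_eq 0 s
  have hp1 : 0 < p - 1 := Nat.sub_pos_of_lt hp.out.one_lt
  have hα : ‖α s‖ ^ (p ^ s * (p - 1)) = ‖(p : B)‖ ^ (v * (p - 1)) := by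
    rw [pow_mul, h.norm_alpha_pow, pow_mul]
  have hζ : ‖ζ 1 - 1‖ ^ (p ^ s * (p - 1)) = ‖(p : B)‖ ^ p ^ s := by
    have := norm_sub_one_pow_of_isPrimitiveRoot (h.isPrimitiveRoot (0 + 1))
    rw [pow_zero, mul_one, zero_add] at this
    rw [mul_comm, pow_mul, this]
  have hcoprime : (v * (p - 1)).Coprime (p ^ s) := by
    refine Nat.Coprime.pow_right s (Nat.Coprime.mul_left ?_ ?_)
    · exact ((Nat.Prime.coprime_iff_not_dvd hp.out).2 h.not_dvd).symm
    · exact (Nat.coprime_of_lt_prime hp1.ne' (Nat.sub_lt hp.out.pos one_pos) hp.out).symm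
  obtain ⟨i, j, hij⟩ := exists_norm_zpow_mul_zpow_pow_eq h.isDiscreteNorm.pos hα hζ hcoprime
  refine ⟨i, j, mul_mem (zpow_mem (alpha_mem_kummerField _ _) i)
    (zpow_mem (sub_mem (zeta_mem_kummerField _ _) (one_mem _)) j), ?_, hfinrank ▸ hij⟩
  exact hfinrank ▸ Nat.mul_pos (pow_pos hp.out.pos s) hp1

variable [IsIsometricSMul (B ≃ₐ[F] B) B]

theorem isJump_left_zero (h : IsKummerGrid F p v ζ α) (k : ℕ) :
    IsJump ‖(p : B)‖ (kummerField F ζ α (k + 1) 0) (kummerField F ζ α (k + 2) 0)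
      (p ^ (k + 1) - 1) := by
  have hfinrank : finrank F (kummerField F ζ α (k + 2) 0) = (p - 1) * p ^ (k + 1) :=
    h.finrank_eq (k + 1) 0
  have hpos : 0 < p ^ (k + 1) := pow_pos hp.out.pos _
  have hy : IsUniformizer ‖(p : B)‖ (kummerField F ζ α (k + 2) 0) (ζ (k + 2) - 1) :=
    { mem := sub_mem (zeta_mem_kummerField _ _) (one_mem _)
      finrank_pos := hfinrank ▸ Nat.mul_pos (Nat.sub_pos_of_lt hp.out.one_lt) hpos
      norm_pow_finrank := hfinrank ▸ norm_sub_one_pow_of_isPrimitiveRoot (h.isPrimitiveRoot _) }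
  refine hy.isJump h.isDiscreteNorm fun g hg hgy ↦ ?_
  have hζ0 := h.zeta_ne_zero (k + 2)
  have hω := div_pow_eq_one_of_mem_fixingSubgroup hζ0 (h.zeta_pow_mem (k + 1) 0) hg
  have hω1 : g (ζ (k + 2)) / ζ (k + 2) ≠ 1 := fun h1 ↦
    hgy (by rw [map_sub, map_one, (div_eq_one_iff_eq hζ0).1 h1])
  have hζ1 : ‖ζ (k + 2)‖ = 1 :=
    ((h.isPrimitiveRoot _).isOfFinOrder (pow_ne_zero _ hp.out.ne_zero)).norm_eq_one
  rw [Nat.sub_add_cancel hpos, ← hy.norm_sub_one_eq_pow hfinrank hω hω1, map_sub, map_one,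
    sub_sub_sub_cancel_right, div_sub_one hζ0, norm_div, hζ1, div_one]

theorem isJump_right_zero (h : IsKummerGrid F p v ζ α) (s : ℕ) :
    IsJump ‖(p : B)‖ (kummerField F ζ α 1 s) (kummerField F ζ α 1 (s + 1)) (p ^ (s + 1)) := by
  obtain ⟨i, j, hx⟩ := h.exists_isUniformizer_zpow_mul_zpow (s + 1)
  have hfinrank : finrank F (kummerField F ζ α 1 (s + 1)) = (p - 1) * p ^ (s + 1) := by
    simpa using h.finrank_eq 0 (s + 1)
  refine hx.isJump h.isDiscreteNorm fun g hg hgx ↦ ?_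
  have hα0 := h.alpha_ne_zero (s + 1)
  set ω := g (α (s + 1)) / α (s + 1) with hω_def
  have hω : ω ^ p = 1 := div_pow_eq_one_of_mem_fixingSubgroup hα0 (h.alpha_pow_mem 1 s) hg
  have hgζ : g (ζ 1) = ζ 1 := (mem_fixingSubgroup_iff _ g).1 hg _ (zeta_mem_kummerField 1 s)
  have hmul : g (α (s + 1) ^ i * (ζ 1 - 1) ^ j) = ω ^ i * (α (s + 1) ^ i * (ζ 1 - 1) ^ j) := by
    rw [map_mul, map_zpow₀, map_zpow₀, map_sub, map_one, hgζ, ← mul_assoc, ← mul_zpow, hω_def,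
      div_mul_cancel₀ _ hα0]
  have hωi : (ω ^ i) ^ p = 1 := by rw [← zpow_natCast, zpow_comm, zpow_natCast, hω, one_zpow]
  have hωi1 : ω ^ i ≠ 1 := fun h1 ↦ hgx (by rw [hmul, h1, one_mul])
  rw [hmul, pow_succ, ← hx.norm_sub_one_eq_pow hfinrank hωi hωi1, ← norm_mul, sub_one_mul]

variable [IsGalois F B]

theorem exists_isJump (h : IsKummerGrid F p v ζ α) (hp2 : 2 < p) (k s : ℕ) :
    (∃ t, IsJump ‖(p : B)‖ (kummerField F ζ α (k + 1) s) (kummerField F ζ α (k + 2) s) t ∧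
        IsLeftJumpValue p k s t) ∧
      ∃ t, IsJump ‖(p : B)‖ (kummerField F ζ α (k + 1) s) (kummerField F ζ α (k + 1) (s + 1)) t ∧
        IsRightJumpValue p k s t :=
  h.isGaloisGrid.exists_isJump h.isDiscreteNorm hp2 h.isJump_left_zero h.isJump_right_zero k s

end IsKummerGrid

section JumpFormulas

variable {p r s t : ℕ}

theorem IsLeftJumpValue.formula (h : IsLeftJumpValue p r s t) (hsr : s ≤ r) :
    (p + 1) * t + 2 * p ^ (2 * s + 1) + 1 = (p + 1) * p ^ (r + 2 + s - 1) + p := by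
  rw [show r + 2 + s - 1 = r + s + 1 by lia]
  exact h.of_le hsr

theorem IsRightJumpValue.formula_diag (h : IsRightJumpValue p s s t) :
    (p + 1) * t = p ^ (2 * (s + 1)) + p ^ (2 * (s + 1) - 2) + p - 1 := by
  have e := h.of_le (Nat.le_succ s)
  rw [show 2 * (s + 1) = 2 * s + 2 by ring, Nat.add_sub_cancel]
  refine eq_tsub_of_add_eq ?_
  zify at e ⊢
  linear_combination e

theorem IsRightJumpValue.formula_of_lt (h : IsRightJumpValue p r s t) (hsr : s < r) :
    (p + 1) * t = 2 * p ^ (2 * (s + 1)) + p - 1 :=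
  eq_tsub_of_add_eq (h.of_gt hsr)

end JumpFormulas

section RingOfInt

variable {p : ℕ} [hp : Fact p.Prime] {L : Type*} [Field L] [Algebra ℚ_[p] L]

theorem valInt_zero : valInt p L 0 = 0 := by
  have huniv : {n : ℕ | ∃ y ∈ maxIdeal p L ^ n, (y : L) = 0} = Set.univ :=
    Set.eq_univ_of_forall fun n ↦ ⟨0, zero_mem _, rfl⟩
  rw [valInt, huniv]
  exact Nat.sSup_of_not_bddAbove not_bddAbove_univ

theorem spectralNorm_natCast_prime : spectralNorm ℚ_[p] L (p : L) = (p : ℝ)⁻¹ := by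
  rw [← map_natCast (algebraMap ℚ_[p] L), spectralNorm_extends, Padic.norm_p]

theorem natCast_prime_ne_zero_ringOfInt : (p : ringOfInt p L) ≠ 0 := fun h ↦ by
  have hL : spectralNorm ℚ_[p] L (p : L) = 0 := by
    rw [← Subring.coe_natCast (ringOfInt p L), h, Subring.coe_zero, spectralNorm_zero]
  rw [spectralNorm_natCast_prime] at hL
  exact inv_ne_zero (Nat.cast_ne_zero.2 hp.out.ne_zero) hL

variable [Algebra.IsAlgebraic ℚ_[p] L]

theorem mem_ringOfInt_iff {x : L} : x ∈ ringOfInt p L ↔ spectralNorm ℚ_[p] L x ≤ 1 := by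
  let := padicIntAlgebra p L
  have : IsScalarTower ℤ_[p] ℚ_[p] L := IsScalarTower.of_algebraMap_eq fun _ ↦ rfl
  have hx : IsIntegral ℚ_[p] x := Algebra.IsIntegral.isIntegral x
  change IsIntegral ℤ_[p] x ↔ _
  rw [spectralNorm, spectralValue_le_one_iff (minpoly.monic hx)]
  constructor
  · intro h n
    rw [minpoly.isIntegrallyClosed_eq_field_fractions' ℚ_[p] h, coeff_map]
    exact PadicInt.norm_le_one _
  · intro h
    have hlift : minpoly ℚ_[p] x ∈ lifts (algebraMap ℤ_[p] ℚ_[p]) :=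
      (lifts_iff_coeff_lifts _).2 fun n ↦ ⟨⟨_, h n⟩, rfl⟩
    obtain ⟨P, hP, -, hmonic⟩ := lifts_and_natDegree_eq_and_monic hlift (minpoly.monic hx)
    refine ⟨P, hmonic, ?_⟩
    rw [IsScalarTower.algebraMap_eq ℤ_[p] ℚ_[p] L, ← eval₂_map, hP]
    exact minpoly.aeval ℚ_[p] x

theorem dvd_ringOfInt_iff {x y : ringOfInt p L} :
    x ∣ y ↔ spectralNorm ℚ_[p] L y ≤ spectralNorm ℚ_[p] L x := by
  simp only [← spectralMulAlgNorm_def]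
  constructor
  · rintro ⟨c, rfl⟩
    rw [Subring.coe_mul, map_mul]
    exact mul_le_of_le_one_right (apply_nonneg _ _) (mem_ringOfInt_iff.1 c.2)
  · intro hle
    rcases eq_or_ne x 0 with rfl | hx
    · have hy : spectralNorm ℚ_[p] L y = 0 :=
        (hle.trans_eq (map_zero _)).antisymm (spectralNorm_nonneg _)
      exact (Subtype.ext (eq_zero_of_map_spectralNorm_eq_zero hy
        (Algebra.IsAlgebraic.isAlgebraic _)) : y = 0).symm.dvd
    · have hx' : (x : L) ≠ 0 := fun h ↦ hx (Subtype.ext h)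
      refine ⟨⟨y / x, mem_ringOfInt_iff.2 ?_⟩, Subtype.ext (mul_div_cancel₀ _ hx').symm⟩
      rw [← spectralMulAlgNorm_def, map_div₀]
      exact div_le_one_of_le₀ hle (apply_nonneg _ _)

theorem isUnit_ringOfInt_iff {x : ringOfInt p L} :
    IsUnit x ↔ 1 ≤ spectralNorm ℚ_[p] L x := by
  rw [isUnit_iff_dvd_one, dvd_ringOfInt_iff, Subring.coe_one, spectralNorm_one]

theorem not_isField_ringOfInt : ¬IsField (ringOfInt p L) := by
  intro h
  obtain ⟨b, hb⟩ := h.mul_inv_cancel natCast_prime_ne_zero_ringOfInt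
  have hunit := isUnit_ringOfInt_iff.1 (.of_mul_eq_one b hb)
  rw [Subring.coe_natCast, spectralNorm_natCast_prime] at hunit
  exact (inv_lt_one_of_one_lt₀ (Nat.one_lt_cast.2 hp.out.one_lt)).not_ge hunit

instance valuationRing_ringOfInt : ValuationRing (ringOfInt p L) :=
  ValuationRing.iff_dvd_total.2 ⟨fun x y ↦ by
    rw [dvd_ringOfInt_iff, dvd_ringOfInt_iff]
    exact le_total _ _⟩

end RingOfInt

section DiscreteValuation

variable {p : ℕ} [hp : Fact p.Prime] {L : Type*} [Field L] [Algebra ℚ_[p] L]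
  [FiniteDimensional ℚ_[p] L]

instance isDiscreteValuationRing_ringOfInt : IsDiscreteValuationRing (ringOfInt p L) := by
  have : IsNoetherianRing (ringOfInt p L) := by
    let := padicIntAlgebra p L
    have : IsScalarTower ℤ_[p] ℚ_[p] L := IsScalarTower.of_algebraMap_eq fun _ ↦ rfl
    exact IsIntegralClosure.isNoetherianRing ℤ_[p] ℚ_[p] L (integralClosure ℤ_[p] L)
  exact ((IsDiscreteValuationRing.TFAE (ringOfInt p L) not_isField_ringOfInt).out 0 1).2
    valuationRing_ringOfInt

theorem maxIdeal_eq_maximalIdeal : maxIdeal p L = IsLocalRing.maximalIdeal (ringOfInt p L) :=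
  IsLocalRing.jacobson_eq_maximalIdeal ⊥ bot_ne_top

theorem irreducible_ringOfInt_iff {ϖ : ringOfInt p L} :
    Irreducible ϖ ↔ maxIdeal p L = Ideal.span {ϖ} := by
  rw [maxIdeal_eq_maximalIdeal, IsDiscreteValuationRing.irreducible_iff_uniformizer]

namespace ringOfInt

variable {ϖ : ringOfInt p L} (hϖ : Irreducible ϖ)
include hϖ

theorem spectralNorm_pos : 0 < spectralNorm ℚ_[p] L ϖ :=
  spectralNorm_zero_lt (fun h ↦ hϖ.ne_zero (Subtype.ext h)) (Algebra.IsAlgebraic.isAlgebraic _)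

theorem spectralNorm_lt_one : spectralNorm ℚ_[p] L ϖ < 1 :=
  not_le.1 fun h ↦ hϖ.not_isUnit (isUnit_ringOfInt_iff.2 h)

theorem mem_maxIdeal_pow_iff {x : ringOfInt p L} {n : ℕ} :
    x ∈ maxIdeal p L ^ n ↔ spectralNorm ℚ_[p] L x ≤ spectralNorm ℚ_[p] L ϖ ^ n := by
  rw [irreducible_ringOfInt_iff.1 hϖ, Ideal.span_singleton_pow, Ideal.mem_span_singleton,
    dvd_ringOfInt_iff, Subring.coe_pow]
  simp only [← spectralMulAlgNorm_def, map_pow]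

theorem mem_maxIdeal_pow_iff_le {x : ringOfInt p L} {m n : ℕ}
    (hm : spectralNorm ℚ_[p] L x = spectralNorm ℚ_[p] L ϖ ^ m) :
    x ∈ maxIdeal p L ^ n ↔ n ≤ m := by
  rw [mem_maxIdeal_pow_iff hϖ, hm,
    pow_le_pow_iff_right_of_lt_one₀ (spectralNorm_pos hϖ) (spectralNorm_lt_one hϖ)]

theorem exists_spectralNorm_eq_pow {x : ringOfInt p L} (hx : x ≠ 0) :
    ∃ m : ℕ, spectralNorm ℚ_[p] L x = spectralNorm ℚ_[p] L ϖ ^ m := by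
  obtain ⟨m, u, rfl⟩ := IsDiscreteValuationRing.eq_unit_mul_pow_irreducible hx hϖ
  have hu : spectralNorm ℚ_[p] L (u : ringOfInt p L) = 1 :=
    (mem_ringOfInt_iff.1 (u : ringOfInt p L).2).antisymm (isUnit_ringOfInt_iff.1 u.isUnit)
  refine ⟨m, ?_⟩
  rw [← spectralMulAlgNorm_def] at hu ⊢
  rw [Subring.coe_mul, map_mul, hu, one_mul, Subring.coe_pow, map_pow, spectralMulAlgNorm_def]

theorem exists_spectralNorm_eq_zpow {x : L} (hx : x ≠ 0) :
    ∃ m : ℤ, spectralNorm ℚ_[p] L x = spectralNorm ℚ_[p] L ϖ ^ m := by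
  have hint {y : L} (hy0 : y ≠ 0) (hy : spectralNorm ℚ_[p] L y ≤ 1) :=
    exists_spectralNorm_eq_pow hϖ (x := ⟨y, mem_ringOfInt_iff.2 hy⟩) fun h ↦
      hy0 (congrArg Subtype.val h)
  have hinv : spectralNorm ℚ_[p] L x⁻¹ = (spectralNorm ℚ_[p] L x)⁻¹ :=
    map_inv₀ (spectralMulAlgNorm ℚ_[p] L) x
  rcases le_total (spectralNorm ℚ_[p] L x) 1 with hle | hge
  · obtain ⟨m, hm⟩ := hint hx hle
    exact ⟨m, by rw [zpow_natCast, ← hm]⟩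
  · obtain ⟨m, hm⟩ := hint (inv_ne_zero hx) (hinv.trans_le (inv_le_one_of_one_le₀ hge))
    exact ⟨-m, by rw [zpow_neg, zpow_natCast, ← hm, hinv, inv_inv]⟩

theorem spectralNorm_eq_pow_valInt {x : L} (hx : x ≠ 0) (hxO : x ∈ ringOfInt p L) :
    spectralNorm ℚ_[p] L x = spectralNorm ℚ_[p] L ϖ ^ valInt p L x := by
  obtain ⟨m, hm⟩ := exists_spectralNorm_eq_pow hϖ (x := ⟨x, hxO⟩) fun h ↦
    hx (congrArg Subtype.val h)
  have hset : {n : ℕ | ∃ y ∈ maxIdeal p L ^ n, (y : L) = x} = Set.Iic m := by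
    ext n
    rw [Set.mem_Iic, ← mem_maxIdeal_pow_iff_le hϖ hm]
    exact ⟨fun ⟨y, hy, hyx⟩ ↦ (Subtype.ext hyx : y = ⟨x, hxO⟩) ▸ hy, fun h ↦ ⟨_, h, rfl⟩⟩
  rw [valInt, hset, csSup_Iic, ← hm]

theorem spectralNorm_prime_eq_pow_eAbs :
    spectralNorm ℚ_[p] L (p : L) = spectralNorm ℚ_[p] L ϖ ^ eAbs p L := by
  obtain ⟨m, hm⟩ := exists_spectralNorm_eq_pow hϖ natCast_prime_ne_zero_ringOfInt
  have hset : {n : ℕ | Ideal.span {(p : ringOfInt p L)} ≤ maxIdeal p L ^ n} = Set.Iic m := by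
    ext n
    rw [Set.mem_ofPred_eq, Ideal.span_singleton_le_iff_mem, mem_maxIdeal_pow_iff_le hϖ hm,
      Set.mem_Iic]
  rw [eAbs, hset, csSup_Iic, ← hm, Subring.coe_natCast]

end ringOfInt

theorem eAbs_eq_one (hunram : maxIdeal p L = Ideal.span {(p : ringOfInt p L)}) :
    eAbs p L = 1 := by
  have hirr := irreducible_ringOfInt_iff.2 hunram
  have hpow := ringOfInt.spectralNorm_prime_eq_pow_eAbs hirr
  rw [Subring.coe_natCast] at hpow
  refine (pow_right_injective₀ (ringOfInt.spectralNorm_pos hirr)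
    (ringOfInt.spectralNorm_lt_one hirr).ne ?_).symm
  simpa using hpow

end DiscreteValuation

section Embedding

variable {p : ℕ} [hp : Fact p.Prime] {F K L B : Type*} [Field F] [Field K] [Field L] [NormedField B]
  [Algebra F B] [Algebra F K] [Algebra F L] [Algebra K L] [IsScalarTower F K L]

theorem finrank_fieldRange (ψ : L →ₐ[F] B) : finrank F ψ.fieldRange = finrank F L :=
  (AlgEquiv.ofInjectiveField ψ).toLinearEquiv.finrank_eq.symm

theorem fieldRange_comp_inclusion {Ω : Type*} [Field Ω] [Algebra F Ω]
    {A L : IntermediateField F Ω} (φ : A →ₐ[F] B) {E : IntermediateField F A}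
    (hE : E.map A.val = L) (h : L ≤ A) : (φ.comp (inclusion h)).fieldRange = E.map φ := by
  subst hE
  apply le_antisymm
  · rintro _ ⟨⟨_, y, hy, rfl⟩, rfl⟩
    exact ⟨y, hy, rfl⟩
  · rintro _ ⟨y, hy, rfl⟩
    exact ⟨⟨y, y, hy, rfl⟩, rfl⟩

theorem exists_mem_fixingSubgroup_comp_eq [Normal F B] (ψ : L →ₐ[F] B) (σ : L ≃ₐ[K] L) :
    ∃ g ∈ (ψ.comp (IsScalarTower.toAlgHom F K L)).fieldRange.fixingSubgroup,
      ∀ x, g (ψ x) = ψ (σ x) := by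
  let := ψ.toRingHom.toAlgebra
  have : IsScalarTower F L B := IsScalarTower.of_algebraMap_eq fun x ↦ (ψ.commutes x).symm
  have hg (x : L) : (σ.restrictScalars F).liftNormal B (ψ x) = ψ (σ x) :=
    (σ.restrictScalars F).liftNormal_commutes B x
  refine ⟨(σ.restrictScalars F).liftNormal B, (mem_fixingSubgroup_iff _ _).2 ?_, hg⟩
  rintro _ ⟨k, rfl⟩
  exact (hg _).trans (congrArg ψ (σ.commutes k))

theorem isGalois_of_extendScalars_fieldRange (ψ : L →ₐ[F] B)
    {h : (ψ.comp (IsScalarTower.toAlgHom F K L)).fieldRange ≤ ψ.fieldRange}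
    (hgal : IsGalois (ψ.comp (IsScalarTower.toAlgHom F K L)).fieldRange (extendScalars h)) :
    IsGalois K L := by
  let e₁ := AlgEquiv.ofInjectiveField (ψ.comp (IsScalarTower.toAlgHom F K L))
  let e₂ := AlgEquiv.ofInjectiveField ψ
  let e₁' : (ψ.comp (IsScalarTower.toAlgHom F K L)).fieldRange ≃+* K := e₁.symm.toRingEquiv
  let e₂' : extendScalars h ≃+* L := e₂.symm.toRingEquiv
  refine IsGalois.of_equiv_equiv (f := e₁') (g := e₂') (RingHom.ext fun x ↦ ?_)
  obtain ⟨k, rfl⟩ := e₁.surjective x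
  change algebraMap K L (e₁.symm (e₁ k)) = e₂.symm (e₂ (algebraMap K L k))
  rw [e₁.symm_apply_apply, e₂.symm_apply_apply]

theorem nontrivial_algEquiv_of_finrank_lt [FiniteDimensional F L] [IsGalois K L]
    (hlt : finrank F K < finrank F L) : Nontrivial (L ≃ₐ[K] L) := by
  have : FiniteDimensional K L := .right F K L
  rw [← Finite.one_lt_card_iff_nontrivial, IsGalois.card_aut_eq_finrank]
  by_contra! hle
  rw [← finrank_mul_finrank F K L] at hlt
  exact hlt.not_ge ((Nat.mul_le_mul_left _ hle).trans_eq (mul_one _))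

theorem hasUniqueRamJump_of_mem_ramSet_iff [Algebra ℚ_[p] L] [Nontrivial (L ≃ₐ[K] L)] {t : ℕ}
    (hmem : ∀ (σ : L ≃ₐ[K] L) (i : ℕ), σ ∈ ramSet p K L i ↔ σ = 1 ∨ i ≤ t) :
    HasUniqueRamJump p K L t := by
  obtain ⟨σ, hσ⟩ := exists_ne (1 : L ≃ₐ[K] L)
  constructor
  · intro h
    have := (hmem σ (t + 1)).1 (h ▸ (hmem σ t).2 (Or.inr le_rfl))
    exact this.elim hσ (by lia)
  · intro t' h
    by_contra! hne
    refine h (Set.ext fun τ ↦ ?_)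
    rw [hmem, hmem]
    exact or_congr_right (by lia)

variable [NormedAlgebra ℚ_[p] B] [Algebra.IsAlgebraic ℚ_[p] B]

theorem norm_algHom_eq_spectralNorm [Algebra ℚ_[p] L] (ψ : L →ₐ[ℚ_[p]] B) (x : L) :
    ‖ψ x‖ = spectralNorm ℚ_[p] L x := by
  rw [NormedAlgebra.norm_eq_spectralNorm ℚ_[p], spectralNorm, spectralNorm,
    minpoly.algHom_eq ψ ψ.injective]

variable [Algebra ℚ_[p] F] [IsScalarTower ℚ_[p] F B]

theorem isIsometricSMul_algEquiv (p : ℕ) [Fact p.Prime] (F B : Type*) [Field F] [NormedField B]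
    [Algebra F B] [NormedAlgebra ℚ_[p] B] [Algebra.IsAlgebraic ℚ_[p] B] [Algebra ℚ_[p] F]
    [IsScalarTower ℚ_[p] F B] : IsIsometricSMul (B ≃ₐ[F] B) B where
  isometry_smul g := AddMonoidHomClass.isometry_of_norm g fun x ↦
    (norm_algHom_eq_spectralNorm (g.toAlgHom.restrictScalars ℚ_[p]) x).trans
      (NormedAlgebra.norm_eq_spectralNorm ℚ_[p] x).symm

theorem isDiscreteNorm_of_unramified [FiniteDimensional ℚ_[p] F]
    (hunram : maxIdeal p F = Ideal.span {(p : ringOfInt p F)}) :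
    IsDiscreteNorm F B ‖(p : B)‖ := by
  have hirr := irreducible_ringOfInt_iff.2 hunram
  have hnorm (x : F) : ‖algebraMap F B x‖ = spectralNorm ℚ_[p] F x :=
    norm_algHom_eq_spectralNorm ((Algebra.ofId F B).restrictScalars ℚ_[p]) x
  have hp' : ‖(p : B)‖ = spectralNorm ℚ_[p] F (p : ringOfInt p F) := by
    rw [Subring.coe_natCast, ← hnorm, map_natCast]
  rw [hp']
  refine ⟨ringOfInt.spectralNorm_pos hirr, ringOfInt.spectralNorm_lt_one hirr, fun k hk ↦ ?_⟩
  rw [hnorm]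
  exact ringOfInt.exists_spectralNorm_eq_zpow hirr hk

variable [Algebra ℚ_[p] L] [IsScalarTower ℚ_[p] F L] {ψ : L →ₐ[F] B} {ϖ : ringOfInt p L} {q : ℝ}
  {t : ℕ}

theorem exists_irreducible_isUniformizer [FiniteDimensional ℚ_[p] F] (ψ : L →ₐ[F] B)
    (hpos : 0 < finrank F L) (he : eAbs p L = finrank F L) :
    ∃ ϖ : ringOfInt p L, Irreducible ϖ ∧ IsUniformizer ‖(p : B)‖ ψ.fieldRange (ψ ϖ) := by
  have : FiniteDimensional F L := .of_finrank_pos hpos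
  have : FiniteDimensional ℚ_[p] L := .trans ℚ_[p] F L
  have hnorm (x : L) : ‖ψ x‖ = spectralNorm ℚ_[p] L x :=
    norm_algHom_eq_spectralNorm (ψ.restrictScalars ℚ_[p]) x
  obtain ⟨ϖ, hϖ⟩ := IsDiscreteValuationRing.exists_irreducible (ringOfInt p L)
  refine ⟨ϖ, hϖ, ⟨ϖ, rfl⟩, (finrank_fieldRange ψ).symm ▸ hpos, ?_⟩
  calc ‖ψ ϖ‖ ^ finrank F ψ.fieldRange = spectralNorm ℚ_[p] L ϖ ^ eAbs p L := by
        rw [finrank_fieldRange, he, hnorm]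
    _ = ‖(p : B)‖ := by
        rw [← ringOfInt.spectralNorm_prime_eq_pow_eAbs hϖ, ← hnorm, map_natCast]

variable [IsUltrametricDist B] [Normal F B]

theorem mem_ramSet_iff_norm_le [FiniteDimensional ℚ_[p] L] (hF : IsDiscreteNorm F B q)
    (hϖ : Irreducible ϖ) (hy : IsUniformizer q ψ.fieldRange (ψ ϖ)) (σ : L ≃ₐ[K] L) (i : ℕ) :
    σ ∈ ramSet p K L i ↔ ‖ψ (σ ϖ) - ψ ϖ‖ ≤ ‖ψ ϖ‖ ^ (i + 1) := by
  have := isIsometricSMul_algEquiv p F B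
  obtain ⟨g, -, hg⟩ := exists_mem_fixingSubgroup_comp_eq ψ σ
  have hnorm (x : L) : ‖ψ x‖ = spectralNorm ℚ_[p] L x :=
    norm_algHom_eq_spectralNorm (ψ.restrictScalars ℚ_[p]) x
  have hmem (x : L) : x ∈ ringOfInt p L ↔ ‖ψ x‖ ≤ 1 := by rw [hnorm, mem_ringOfInt_iff]
  have hpow (x : ringOfInt p L) : x ∈ maxIdeal p L ^ (i + 1) ↔ ‖ψ x‖ ≤ ‖ψ ϖ‖ ^ (i + 1) := by
    rw [ringOfInt.mem_maxIdeal_pow_iff hϖ, hnorm, hnorm]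
  rw [← map_sub]
  constructor
  · intro h
    obtain ⟨y, hy, hyϖ⟩ := h ϖ
    exact hyϖ ▸ (hpow y).1 hy
  · intro h x
    have hle : ‖ψ (σ (x : L) - x)‖ ≤ ‖ψ ϖ‖ ^ (i + 1) := by
      rw [map_sub, ← hg]
      refine (hy.norm_map_sub_le hF g ⟨x, rfl⟩ ((hmem _).1 x.2)).trans ?_
      rwa [hg, ← map_sub]
    exact ⟨⟨_, (hmem _).2 (hle.trans (pow_le_one₀ (norm_nonneg _) (hy.norm_lt_one hF).le))⟩,
      (hpow _).2 hle, rfl⟩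

theorem mem_ramSet_iff [FiniteDimensional ℚ_[p] L] (hF : IsDiscreteNorm F B q) (hϖ : Irreducible ϖ)
    (hy : IsUniformizer q ψ.fieldRange (ψ ϖ))
    (hJ : IsJump q (ψ.comp (IsScalarTower.toAlgHom F K L)).fieldRange ψ.fieldRange t)
    (σ : L ≃ₐ[K] L) (i : ℕ) : σ ∈ ramSet p K L i ↔ σ = 1 ∨ i ≤ t := by
  rw [mem_ramSet_iff_norm_le hF hϖ hy]
  rcases eq_or_ne σ 1 with rfl | hσ
  · simp
  · obtain ⟨g, hgK, hg⟩ := exists_mem_fixingSubgroup_comp_eq ψ σ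
    have hmove : g (ψ ϖ) ≠ ψ ϖ := fun hfix ↦ hσ <| AlgEquiv.ext fun x ↦ ψ.injective <|
      (hg x).symm.trans <|
        (mem_fixingSubgroup_iff _ g).1 (hy.mem_fixingSubgroup hF hfix) _ ⟨x, rfl⟩
    rw [← hg, hJ g hgK _ hy hmove, pow_le_pow_iff_right_of_lt_one₀ (hy.norm_pos hF)
      (hy.norm_lt_one hF), add_le_add_iff_right, or_iff_right hσ]

theorem hasUniqueRamJump_of_isJump [FiniteDimensional ℚ_[p] F]
    (hF : IsDiscreteNorm F B ‖(p : B)‖) (ψ : L →ₐ[F] B) (hlt : finrank F K < finrank F L)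
    (he : eAbs p L = finrank F L)
    {h : (ψ.comp (IsScalarTower.toAlgHom F K L)).fieldRange ≤ ψ.fieldRange}
    (hgal : IsGalois (ψ.comp (IsScalarTower.toAlgHom F K L)).fieldRange (extendScalars h))
    (hJ : IsJump ‖(p : B)‖ (ψ.comp (IsScalarTower.toAlgHom F K L)).fieldRange ψ.fieldRange t) :
    HasUniqueRamJump p K L t := by
  have hpos : 0 < finrank F L := (Nat.zero_le _).trans_lt hlt
  have : FiniteDimensional F L := .of_finrank_pos hpos
  have : FiniteDimensional ℚ_[p] L := .trans ℚ_[p] F L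
  have := isGalois_of_extendScalars_fieldRange ψ hgal
  have := nontrivial_algEquiv_of_finrank_lt hlt
  obtain ⟨ϖ, hϖ, hy⟩ := exists_irreducible_isUniformizer ψ hpos he
  exact hasUniqueRamJump_of_mem_ramSet_iff (mem_ramSet_iff hF hϖ hy hJ)

theorem hasUniqueRamJumpHom_inclusion_of_isJump {Ω : Type*} [Field Ω] [Algebra F Ω]
    [Algebra ℚ_[p] Ω] [IsScalarTower ℚ_[p] F Ω] [FiniteDimensional ℚ_[p] F]
    {L₁ L₂ : IntermediateField F Ω} {K₁ K₂ : IntermediateField F B}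
    (hF : IsDiscreteNorm F B ‖(p : B)‖) (hL : L₁ ≤ L₂) (hK : K₁ ≤ K₂) (ψ : L₂ →ₐ[F] B)
    (hK₁ : (ψ.comp (inclusion hL)).fieldRange = K₁) (hK₂ : ψ.fieldRange = K₂)
    (hlt : finrank F L₁ < finrank F L₂) (he : eAbs p L₂ = finrank F L₂)
    (hgal : IsGalois K₁ (extendScalars hK)) (hJ : IsJump ‖(p : B)‖ K₁ K₂ t) :
    HasUniqueRamJumpHom p L₁ L₂ (inclusion hL).toRingHom t := by
  let := (inclusion hL).toRingHom.toAlgebra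
  have : IsScalarTower F L₁ L₂ := .of_algebraMap_eq fun _ ↦ rfl
  subst hK₁ hK₂
  exact hasUniqueRamJump_of_isJump hF ψ hlt he hgal hJ

end Embedding

/-- The standing hypotheses on the fields `F(ζ r, α s)`, where `ζ r` is a root of unity of order
`p ^ r` and `α s` a `p ^ s`-th root of `a`: `F` is unramified over `ℚ_[p]`, the valuation of `a` is
prime to `p`, and for `r ≥ 1` the fields are totally ramified over `F` of the largest possible
degree. -/
structure IsKummerTower (p : ℕ) [Fact p.Prime] {F Ω : Type*} [Field F] [Field Ω] [Algebra F Ω]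
    [Algebra ℚ_[p] F] [Algebra ℚ_[p] Ω] [IsScalarTower ℚ_[p] F Ω] (a : F) (ζ α : ℕ → Ω) :
    Prop where
  unramified : maxIdeal p F = Ideal.span {(p : ringOfInt p F)}
  mem_ringOfInt : a ∈ ringOfInt p F
  not_dvd : ¬p ∣ valInt p F a
  isPrimitiveRoot : ∀ r, IsPrimitiveRoot (ζ r) (p ^ r)
  zeta_pow : ∀ r, ζ (r + 1) ^ p = ζ r
  alpha_zero : α 0 = algebraMap F Ω a
  alpha_pow : ∀ s, α (s + 1) ^ p = α s
  finrank_eq : ∀ k s, finrank F (kummerField F ζ α (k + 1) s) = (p - 1) * p ^ (k + s)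
  eAbs_eq : ∀ k s, eAbs p (kummerField F ζ α (k + 1) s) =
    finrank F (kummerField F ζ α (k + 1) s) * eAbs p F

namespace IsKummerTower

variable {p : ℕ} [hp : Fact p.Prime] {F Ω B : Type*} [Field F] [Field Ω] [Algebra F Ω]
  [Algebra ℚ_[p] F] [Algebra ℚ_[p] Ω] [IsScalarTower ℚ_[p] F Ω] {a : F}

section Algebraic

variable {ζ α : ℕ → Ω}

theorem zeta_mem_algebraicClosure (h : IsKummerTower p a ζ α) (r : ℕ) :
    ζ r ∈ algebraicClosure F Ω :=
  mem_algebraicClosure_iff.2 <| .of_pow (pow_pos hp.out.pos r) <|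
    (h.isPrimitiveRoot r).pow_eq_one ▸ isAlgebraic_one

theorem alpha_mem_algebraicClosure (h : IsKummerTower p a ζ α) (s : ℕ) :
    α s ∈ algebraicClosure F Ω := by
  induction s with
  | zero => exact h.alpha_zero ▸ (algebraicClosure F Ω).algebraMap_mem a
  | succ s ih =>
    exact mem_algebraicClosure_iff.2 <| .of_pow hp.out.pos <|
      (h.alpha_pow s).symm ▸ mem_algebraicClosure_iff.1 ih

theorem finrank_pos (h : IsKummerTower p a ζ α) (k s : ℕ) :
    0 < finrank F (kummerField F ζ α (k + 1) s) := by
  rw [h.finrank_eq]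
  exact Nat.mul_pos (Nat.sub_pos_of_lt hp.out.one_lt) (pow_pos hp.out.pos _)

theorem finrank_lt_left (h : IsKummerTower p a ζ α) (k s : ℕ) :
    finrank F (kummerField F ζ α (k + 1) s) < finrank F (kummerField F ζ α (k + 2) s) := by
  rw [h.finrank_eq, h.finrank_eq]
  exact Nat.mul_lt_mul_of_pos_left (pow_lt_pow_right₀ hp.out.one_lt (by lia))
    (Nat.sub_pos_of_lt hp.out.one_lt)

theorem finrank_lt_right (h : IsKummerTower p a ζ α) (k s : ℕ) :
    finrank F (kummerField F ζ α (k + 1) s) < finrank F (kummerField F ζ α (k + 1) (s + 1)) := by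
  rw [h.finrank_eq, h.finrank_eq]
  exact Nat.mul_lt_mul_of_pos_left (pow_lt_pow_right₀ hp.out.one_lt (by lia))
    (Nat.sub_pos_of_lt hp.out.one_lt)

variable [FiniteDimensional ℚ_[p] F]

theorem eAbs_eq_finrank (h : IsKummerTower p a ζ α) (k s : ℕ) :
    eAbs p (kummerField F ζ α (k + 1) s) = finrank F (kummerField F ζ α (k + 1) s) := by
  rw [h.eAbs_eq, eAbs_eq_one h.unramified, mul_one]

end Algebraic

section Embedding

variable [NormedField B] [NormedAlgebra ℚ_[p] B] [Algebra.IsAlgebraic ℚ_[p] B] [Algebra F B]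
  [IsScalarTower ℚ_[p] F B] [FiniteDimensional ℚ_[p] F]

theorem norm_algebraMap {ζ α : ℕ → Ω} (h : IsKummerTower p a ζ α) :
    ‖algebraMap F B a‖ = ‖(p : B)‖ ^ valInt p F a := by
  have ha : a ≠ 0 := by
    rintro rfl
    exact h.not_dvd ((valInt_zero (p := p) (L := F)).symm ▸ dvd_zero p)
  have hnorm (x : F) : ‖algebraMap F B x‖ = spectralNorm ℚ_[p] F x :=
    norm_algHom_eq_spectralNorm ((Algebra.ofId F B).restrictScalars ℚ_[p]) x
  have hval := ringOfInt.spectralNorm_eq_pow_valInt (irreducible_ringOfInt_iff.2 h.unramified) ha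
    h.mem_ringOfInt
  rw [← hnorm, ← hnorm, Subring.coe_natCast, map_natCast] at hval
  exact hval

variable {A : IntermediateField F Ω} {ζ α : ℕ → A}

theorem kummerField_le (ζ α : ℕ → A) (r s : ℕ) :
    kummerField F (A.val ∘ ζ) (A.val ∘ α) r s ≤ A :=
  kummerField_le_iff.2 ⟨(ζ r).2, (α s).2⟩

theorem fieldRange_eq_kummerField (φ : A →ₐ[F] B) (ζ α : ℕ → A) (r s : ℕ) :
    (φ.comp (inclusion (kummerField_le ζ α r s))).fieldRange =
      kummerField F (φ ∘ ζ) (φ ∘ α) r s := by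
  rw [fieldRange_comp_inclusion φ (map_kummerField A.val r s), map_kummerField]

theorem isKummerGrid (h : IsKummerTower p a (A.val ∘ ζ) (A.val ∘ α)) (φ : A →ₐ[F] B) :
    IsKummerGrid F p (valInt p F a) (φ ∘ ζ) (φ ∘ α) where
  isDiscreteNorm := isDiscreteNorm_of_unramified h.unramified
  isPrimitiveRoot r :=
    ((h.isPrimitiveRoot r).of_map_of_injective A.val.injective).map_of_injective φ.injective
  zeta_pow r := (map_pow φ _ _).symm.trans (congrArg φ (Subtype.ext (h.zeta_pow r)))
  alpha_pow s := (map_pow φ _ _).symm.trans (congrArg φ (Subtype.ext (h.alpha_pow s)))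
  norm_alpha_zero := by
    have hα : α 0 = algebraMap F A a := Subtype.ext h.alpha_zero
    rw [Function.comp_apply, hα, φ.commutes, h.norm_algebraMap]
  not_dvd := h.not_dvd
  finrank_eq k s := by rw [← fieldRange_eq_kummerField, finrank_fieldRange, h.finrank_eq]
  exists_isUniformizer k s := by
    obtain ⟨ϖ, -, hy⟩ := exists_irreducible_isUniformizer
      (φ.comp (inclusion (kummerField_le ζ α (k + 1) s))) (h.finrank_pos k s)
      (h.eAbs_eq_finrank k s)
    exact ⟨_, fieldRange_eq_kummerField φ ζ α (k + 1) s ▸ hy⟩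

variable [IsUltrametricDist B] [IsGalois F B]

theorem exists_hasUniqueRamJumpHom_of_algHom (h : IsKummerTower p a (A.val ∘ ζ) (A.val ∘ α))
    (φ : A →ₐ[F] B) (hp2 : 2 < p) (k s : ℕ) :
    (∀ hle : kummerField F (A.val ∘ ζ) (A.val ∘ α) (k + 1) s ≤
        kummerField F (A.val ∘ ζ) (A.val ∘ α) (k + 2) s,
      ∃ t, HasUniqueRamJumpHom p _ _ (inclusion hle).toRingHom t ∧ IsLeftJumpValue p k s t) ∧
    ∀ hle : kummerField F (A.val ∘ ζ) (A.val ∘ α) (k + 1) s ≤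
        kummerField F (A.val ∘ ζ) (A.val ∘ α) (k + 1) (s + 1),
      ∃ t, HasUniqueRamJumpHom p _ _ (inclusion hle).toRingHom t ∧ IsRightJumpValue p k s t := by
  have hgrid := h.isKummerGrid φ
  have := isIsometricSMul_algEquiv p F B
  obtain ⟨⟨t, hJ, ht⟩, t', hJ', ht'⟩ := hgrid.exists_isJump hp2 k s
  refine ⟨fun hle ↦ ⟨t, ?_, ht⟩, fun hle ↦ ⟨t', ?_, ht'⟩⟩
  · exact hasUniqueRamJumpHom_inclusion_of_isJump hgrid.isDiscreteNorm hle _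
      (φ.comp (inclusion (kummerField_le ζ α (k + 2) s)))
      (fieldRange_eq_kummerField φ ζ α (k + 1) s) (fieldRange_eq_kummerField φ ζ α (k + 2) s)
      (h.finrank_lt_left k s) (h.eAbs_eq_finrank (k + 1) s)
      (hgrid.isGaloisGrid.isGalois_left k s) hJ
  · exact hasUniqueRamJumpHom_inclusion_of_isJump hgrid.isDiscreteNorm hle _
      (φ.comp (inclusion (kummerField_le ζ α (k + 1) (s + 1))))
      (fieldRange_eq_kummerField φ ζ α (k + 1) s)
      (fieldRange_eq_kummerField φ ζ α (k + 1) (s + 1))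
      (h.finrank_lt_right k s) (h.eAbs_eq_finrank k (s + 1))
      (hgrid.isGaloisGrid.isGalois_right k s) hJ'

end Embedding

theorem exists_hasUniqueRamJumpHom [FiniteDimensional ℚ_[p] F] {ζ α : ℕ → Ω}
    (h : IsKummerTower p a ζ α) (hp2 : 2 < p) (k s : ℕ) :
    (∀ hle : kummerField F ζ α (k + 1) s ≤ kummerField F ζ α (k + 2) s,
      ∃ t, HasUniqueRamJumpHom p _ _ (inclusion hle).toRingHom t ∧ IsLeftJumpValue p k s t) ∧
    ∀ hle : kummerField F ζ α (k + 1) s ≤ kummerField F ζ α (k + 1) (s + 1),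
      ∃ t, HasUniqueRamJumpHom p _ _ (inclusion hle).toRingHom t ∧ IsRightJumpValue p k s t := by
  lift ζ to ℕ → algebraicClosure F Ω using h.zeta_mem_algebraicClosure
  lift α to ℕ → algebraicClosure F Ω using h.alpha_mem_algebraicClosure
  have : CharZero F := charZero_of_injective_algebraMap (algebraMap ℚ_[p] F).injective
  have : Algebra.IsAlgebraic ℚ_[p] (AlgebraicClosure F) := .trans ℚ_[p] F _
  let := spectralNorm.normedField ℚ_[p] (AlgebraicClosure F)
  let := spectralNorm.normedAlgebra ℚ_[p] (AlgebraicClosure F)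
  have : IsUltrametricDist (AlgebraicClosure F) :=
    IsUltrametricDist.isUltrametricDist_of_isNonarchimedean_norm isNonarchimedean_spectralNorm
  exact h.exists_hasUniqueRamJumpHom_of_algHom
    (IsAlgClosed.lift : algebraicClosure F Ω →ₐ[F] AlgebraicClosure F) hp2 k s

end IsKummerTower

/-- Let `p` be an odd prime, `F/ℚ_p` finite unramified, `a ∈ 𝒪_F \ 𝒪_F^p` with
`p ∤ v_F(a)`, and suppose the fields `L_{r,s} = F(ζ_{p^r}, a^{1/p^s})` satisfy the
standing hypotheses.  Writing `t_{1,2}(r,s)` for the unique jump of `L_{r,s}/L_{r,s-1}`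
and `t_{1,1}(r,s)` for the unique jump of `L_{r,s}/L_{r-1,s}`, one has, for `r > s ≥ 1`:
`t_{1,2}(s,s) = (p^{2s}+p^{2s-2}+p-1)/(p+1)`, `t_{1,2}(r,s) = (2p^{2s}+p-1)/(p+1)`,
and for `r > s+1`: `t_{1,1}(r,s) = p^{r+s-1} - (2p^{2s+1}-p+1)/(p+1)`
(all stated multiplied out by `p+1`). -/
theorem jump_formulas_of_not_dvd_val (p : ℕ) [Fact p.Prime] (hp : p ≠ 2)
    (F Ω : Type*) [Field F] [Field Ω]
    [Algebra ℚ_[p] F] [FiniteDimensional ℚ_[p] F]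
    (hunram : maxIdeal p F = Ideal.span {(p : ringOfInt p F)})
    [Algebra F Ω] [Algebra ℚ_[p] Ω] [IsScalarTower ℚ_[p] F Ω]
    (a : F) (haO : a ∈ ringOfInt p F) (haP : ¬∃ b ∈ ringOfInt p F, b ^ p = a)
    (hv : ¬p ∣ valInt p F a)
    (ζ : ℕ → Ω) (hζ : ∀ r, IsPrimitiveRoot (ζ r) (p ^ r)) (hζp : ∀ r, ζ (r + 1) ^ p = ζ r)
    (α : ℕ → Ω) (hα0 : α 0 = algebraMap F Ω a) (hαp : ∀ s, α (s + 1) ^ p = α s)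
    (L : ℕ → ℕ → IntermediateField F Ω)
    (hL : ∀ r s, L r s = IntermediateField.adjoin F {ζ r, α s})
    (hmono : ∀ r s r' s', r ≤ r' → s ≤ s' → L r s ≤ L r' s')
    (hdeg : ∀ r s, 1 ≤ r → Module.finrank F ↥(L r s) = (p - 1) * p ^ (r - 1 + s))
    (hram : ∀ r s, 1 ≤ r →
      eAbs p ↥(L r s) = Module.finrank F ↥(L r s) * eAbs p F) :
    ∀ r s : ℕ, 1 ≤ s → s < r →
      (∃ t : ℕ, HasUniqueRamJumpHom p ↥(L s (s - 1)) ↥(L s s)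
          (IntermediateField.inclusion (hmono s (s - 1) s s le_rfl (Nat.sub_le s 1))).toRingHom
          t ∧
        (p + 1) * t = p ^ (2 * s) + p ^ (2 * s - 2) + p - 1) ∧
      (∃ t : ℕ, HasUniqueRamJumpHom p ↥(L r (s - 1)) ↥(L r s)
          (IntermediateField.inclusion (hmono r (s - 1) r s le_rfl (Nat.sub_le s 1))).toRingHom
          t ∧
        (p + 1) * t = 2 * p ^ (2 * s) + p - 1) ∧
      (s + 1 < r →
        ∃ t : ℕ, HasUniqueRamJumpHom p ↥(L (r - 1) s) ↥(L r s)
            (IntermediateField.inclusion (hmono (r - 1) s r s (Nat.sub_le r 1) le_rfl)).toRingHom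
            t ∧
          (p + 1) * t + 2 * p ^ (2 * s + 1) + 1 = (p + 1) * p ^ (r + s - 1) + p) := by
  obtain rfl : L = kummerField F ζ α := funext₂ hL
  have hp2 : 2 < p := (Fact.out : p.Prime).two_le.lt_of_ne' hp
  have h : IsKummerTower p a ζ α := ⟨hunram, haO, hv, hζ, hζp, hα0, hαp,
    fun k s ↦ hdeg (k + 1) s (Nat.le_add_left 1 k), fun k s ↦ hram (k + 1) s (Nat.le_add_left 1 k)⟩
  intro r s hs hsr
  obtain ⟨s, rfl⟩ := Nat.exists_eq_add_of_le' hs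
  obtain ⟨r, rfl⟩ : ∃ k, r = k + 2 := Nat.exists_eq_add_of_le' (by lia)
  refine ⟨?_, ?_, fun hlt ↦ ?_⟩
  · obtain ⟨t, hJ, ht⟩ := (h.exists_hasUniqueRamJumpHom hp2 s s).2 (hmono _ _ _ _ le_rfl s.le_succ)
    exact ⟨t, hJ, ht.formula_diag⟩
  · obtain ⟨t, hJ, ht⟩ :=
      (h.exists_hasUniqueRamJumpHom hp2 (r + 1) s).2 (hmono _ _ _ _ le_rfl s.le_succ)
    exact ⟨t, hJ, ht.formula_of_lt (by lia)⟩
  · obtain ⟨t, hJ, ht⟩ :=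
      (h.exists_hasUniqueRamJumpHom hp2 r (s + 1)).1 (hmono _ _ _ _ (r + 1).le_succ le_rfl)
    exact ⟨t, hJ, ht.formula (by lia)⟩
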